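/- arXiv:1408.5659 — 2 statements merged into one kernel-verified Lean document; each statement's English description precedes it below -/
import Mathlib

section
/- Let k ∈ ℕ, 1 ≤ q < p ≤ ∞, α, β ∈ J_p, and δ > 0. Then there exist constants c₁, c₂ > 0, depending only on k, q, p, α, β, such that c₁·(A + B) ≤ S ≤ c₂·(A + B), where S := sup_{f ∈ B_p^{α,β} ∩ M^k} ω_φ^k(f, δ)_{w_{α,β}, q}, A := sup_{f ∈ B_p^{α,β} ∩ M_+^k} ω_φ^k(f, δ)_{w_{α,β}, q}, and B := sup_{f ∈ B_p^{β,α} ∩ M_+^k} ω_φ^k(f, δ)_{w_{β,α}, q}. -/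
open MeasureTheory Set Filter
open scoped ENNReal

noncomputable section

/-- The Jacobi weight `w_{α,β}(x) = (1+x)^α (1-x)^β`. -/
def jacobi (α β : ℝ) (x : ℝ) : ℝ := (1 + x) ^ α * (1 - x) ^ β

/-- `φ(x) = √(1-x²)`. -/
def phiW (x : ℝ) : ℝ := Real.sqrt (1 - x ^ 2)

/-- The `L^p` norm of `g` on the interval `[a,b]` (essential sup when `p = ∞`). -/
def LpOn (g : ℝ → ℝ) (p : ℝ≥0∞) (a b : ℝ) : ℝ≥0∞ :=
  eLpNorm g p (volume.restrict (Icc a b))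

/-- The `k`-th symmetric difference `Δ_h^k(f,x)` relative to `[-1,1]`. -/
def symmDelta (k : ℕ) (h : ℝ) (f : ℝ → ℝ) (x : ℝ) : ℝ :=
  if (x - k * h / 2 ∈ Icc (-1 : ℝ) 1 ∧ x + k * h / 2 ∈ Icc (-1 : ℝ) 1) then
    ∑ i ∈ Finset.range (k + 1), ((k.choose i : ℝ) * (-1 : ℝ) ^ (k - i) * f (x - k * h / 2 + i * h))
  else 0

/-- Main-part weighted modulus `Ω_φ^k(f,δ)_{w,p}`. -/
def OmegaMain (k : ℕ) (f : ℝ → ℝ) (δ : ℝ) (wt : ℝ → ℝ) (p : ℝ≥0∞) : ℝ≥0∞ :=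
  ⨆ h ∈ Ioc (0 : ℝ) δ,
    LpOn (fun x => wt x * symmDelta k (h * phiW x) f x) p
      (-1 + 2 * (k : ℝ) ^ 2 * h ^ 2) (1 - 2 * (k : ℝ) ^ 2 * h ^ 2)

/-- Forward part `Ω→_φ^k(f,δ)_{w,p}`. -/
def OmegaFwd (k : ℕ) (f : ℝ → ℝ) (δ : ℝ) (wt : ℝ → ℝ) (p : ℝ≥0∞) : ℝ≥0∞ :=
  ⨆ h ∈ Ioc (0 : ℝ) (2 * (k : ℝ) ^ 2 * δ ^ 2),
    LpOn (fun x => wt x * symmDelta k h f (x + k * h / 2)) p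
      (-1) (-1 + 2 * (k : ℝ) ^ 2 * δ ^ 2)

/-- Backward part `Ω←_φ^k(f,δ)_{w,p}`. -/
def OmegaBwd (k : ℕ) (f : ℝ → ℝ) (δ : ℝ) (wt : ℝ → ℝ) (p : ℝ≥0∞) : ℝ≥0∞ :=
  ⨆ h ∈ Ioc (0 : ℝ) (2 * (k : ℝ) ^ 2 * δ ^ 2),
    LpOn (fun x => wt x * symmDelta k h f (x - k * h / 2)) p
      (1 - 2 * (k : ℝ) ^ 2 * δ ^ 2) 1

/-- Weighted Ditzian–Totik modulus `ω_φ^k(f,δ)_{w,p}`. -/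
def omegaDT (k : ℕ) (f : ℝ → ℝ) (δ : ℝ) (wt : ℝ → ℝ) (p : ℝ≥0∞) : ℝ≥0∞ :=
  OmegaMain k f δ wt p + OmegaFwd k f δ wt p + OmegaBwd k f δ wt p

/-- `f` is `k`-monotone on `(-1,1)`: all `k`-th divided differences over `k+1` distinct
points of `(-1,1)` are nonnegative. -/
def kMonotoneOn (k : ℕ) (f : ℝ → ℝ) : Prop :=
  ∀ x : Fin (k + 1) → ℝ, Function.Injective x → (∀ i, x i ∈ Ioo (-1 : ℝ) 1) →
    0 ≤ ∑ i, f (x i) / ∏ j ∈ Finset.univ.erase i, (x i - x j)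

/-- `M^k`, the class of `k`-monotone functions on `(-1,1)`. -/
def MSet (k : ℕ) : Set (ℝ → ℝ) := {f | kMonotoneOn k f}

/-- `M_+^k`, the `k`-monotone functions on `(-1,1)` vanishing on `(-1,0]`. -/
def MPlus (k : ℕ) : Set (ℝ → ℝ) :=
  {f | kMonotoneOn k f ∧ ∀ x : ℝ, -1 < x → x ≤ 0 → f x = 0}

/-- `J_p = (-1/p, ∞)` for finite `p`, `[0,∞)` for `p = ∞`. -/
def Jset (p : ℝ≥0∞) : Set ℝ := if p = ∞ then Ici 0 else Ioi (-1 / p.toReal)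

/-- `W_p^{α,β}`. -/
def WSet (p : ℝ≥0∞) (α β : ℝ) : Set (ℝ → ℝ) :=
  {f | Measurable f ∧ LpOn (fun x => jacobi α β x * f x) p (-1) 1 ≠ ⊤}

/-- `B_p^{α,β}`, the unit sphere of `W_p^{α,β}`. -/
def BSet (p : ℝ≥0∞) (α β : ℝ) : Set (ℝ → ℝ) :=
  {f | Measurable f ∧ LpOn (fun x => jacobi α β x * f x) p (-1) 1 = 1}

/-- Best weighted approximation `E_n(f)_{w,q}` by polynomials of degree at most `n`. -/
def En (n : ℕ) (f : ℝ → ℝ) (wt : ℝ → ℝ) (q : ℝ≥0∞) : ℝ≥0∞ :=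
  ⨅ P ∈ {P : Polynomial ℝ | P.natDegree ≤ n},
    LpOn (fun x => wt x * (f x - P.eval x)) q (-1) 1

/-- `E(X, P_n)_{w,q}`. -/
def EClass (X : Set (ℝ → ℝ)) (n : ℕ) (wt : ℝ → ℝ) (q : ℝ≥0∞) : ℝ≥0∞ :=
  ⨆ f ∈ X, En n f wt q

/-!
A `k`-monotone function `f` can be cut at `0`: the Lagrange interpolants of `f` at `k` nodes that
cluster at `0` accumulate at a polynomial `P` of degree `< k`, and the truncations `f₊` and `f₋`
of `f - P` to `x > 0` and `x ≤ 0` are both `k`-monotone. The sign conditions on divided differences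
of `f₊` and `f₋` over equidistant nodes bound `P` by the values of `f` at these nodes, and averaging
over the spacing bounds `P` by the weighted norm of `f`, hence also the norms of `f₊` and `f₋`.
Since `k`th differences annihilate `P`, the modulus of `f` is at most the sum of those of `f₊`,
which lies in `M_+^k`, and of `f₋`, which lies in `M_+^k` after the reflection `x ↦ -x` that swaps
`α` and `β`; normalising the two pieces gives the upper estimate. For the lower estimate, `M_+^k`
and its reflection are both contained in `M^k`.
-/
section DividedDifference

variable {K : Type*} [Field K] [DecidableEq K]

/-- The divided difference `[s; f]` over a finite set `s` of nodes, linear in `f`. -/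
def dividedDiff (s : Finset K) : (K → K) →ₗ[K] K :=
  ∑ a ∈ s, (∏ b ∈ s.erase a, (a - b))⁻¹ • LinearMap.proj a

lemma dividedDiff_apply (s : Finset K) (f : K → K) :
    dividedDiff s f = ∑ a ∈ s, f a / ∏ b ∈ s.erase a, (a - b) := by
  simp [dividedDiff, LinearMap.sum_apply, div_eq_inv_mul]

lemma dividedDiff_congr {s : Finset K} {f g : K → K} (h : EqOn f g s) :
    dividedDiff s f = dividedDiff s g := by
  simp only [dividedDiff_apply]
  exact Finset.sum_congr rfl fun a ha => by rw [h ha]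

lemma dividedDiff_map {ι : Type*} [DecidableEq ι] (t : Finset ι) (e : ι ↪ K) (f : K → K) :
    dividedDiff (t.map e) f = ∑ i ∈ t, f (e i) / ∏ j ∈ t.erase i, (e i - e j) := by
  simp only [dividedDiff_apply, Finset.sum_map, ← Finset.map_erase, Finset.prod_map]

lemma dividedDiff_eval {s : Finset K} {P : Polynomial K} (hP : P.degree < s.card) :
    dividedDiff s (fun x => P.eval x) = P.coeff (s.card - 1) := by
  rw [dividedDiff_apply, Lagrange.coeff_eq_sum (v := id) (injOn_id _) hP]
  rfl

lemma dividedDiff_eval_eq_zero {s : Finset K} {k : ℕ} (hs : s.card = k + 1) {P : Polynomial K}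
    (hP : P.degree < k) : dividedDiff s (fun x => P.eval x) = 0 := by
  rw [dividedDiff_eval (hP.trans (by rw [hs]; exact_mod_cast k.lt_succ_self)), hs]
  exact Polynomial.coeff_eq_zero_of_degree_lt hP

lemma dividedDiff_map_neg (s : Finset K) (f : K → K) :
    dividedDiff (s.map (Equiv.neg K).toEmbedding) f =
      (-1) ^ (s.card - 1) * dividedDiff s (fun x => f (-x)) := by
  rw [dividedDiff_map, dividedDiff_apply, Finset.mul_sum]
  refine Finset.sum_congr rfl fun a ha => ?_
  have hprod : ∏ b ∈ s.erase a, (-a - -b) = (-1) ^ (s.card - 1) * ∏ b ∈ s.erase a, (a - b) := by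
    rw [← Finset.card_erase_of_mem ha, ← Finset.prod_const, ← Finset.prod_mul_distrib]
    exact Finset.prod_congr rfl fun b _ => by ring
  have hsign : ((-1 : K) ^ (s.card - 1))⁻¹ = (-1) ^ (s.card - 1) := by
    rw [← inv_pow, inv_neg_one]
  simp only [Equiv.coe_toEmbedding, Equiv.neg_apply, hprod]
  rw [div_mul_eq_div_div, div_eq_mul_inv (f (-a)), hsign]
  ring

lemma dividedDiff_erase {s : Finset K} {c : K} (hc : c ∈ s) (f : K → K) :
    dividedDiff (s.erase c) f = dividedDiff s (fun y => (y - c) * f y) := by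
  rw [dividedDiff_apply, dividedDiff_apply, ← Finset.add_sum_erase s _ hc, sub_self, zero_mul,
    zero_div, zero_add]
  refine Finset.sum_congr rfl fun y hy => ?_
  have hyc : y ≠ c := Finset.ne_of_mem_erase hy
  rw [← Finset.mul_prod_erase (s.erase y) _ (Finset.mem_erase.2 ⟨hyc.symm, hc⟩),
    Finset.erase_right_comm, mul_div_mul_left _ _ (sub_ne_zero.2 hyc)]

-- Each term is the divided difference over `s` of a linear factor times `f`.
lemma dividedDiff_exchange {s : Finset K} {a b c : K} (ha : a ∈ s) (hb : b ∈ s) (hc : c ∈ s)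
    (f : K → K) :
    (b - a) * dividedDiff (s.erase c) f =
      (b - c) * dividedDiff (s.erase a) f + (c - a) * dividedDiff (s.erase b) f := by
  simp only [dividedDiff_erase, ha, hb, hc, ← smul_eq_mul, ← map_smul, ← map_add]
  exact dividedDiff_congr fun y _ => by simp only [Pi.smul_apply, Pi.add_apply, smul_eq_mul]; ring

end DividedDifference

section ConsecutiveNodes

variable {K : Type*} [LinearOrder K]

/-- The points of `Z` lying in the order-convex hull of `T`; their number measures how far `T` is
from being a block of consecutive points of `Z`. -/
def nodesInHull (Z T : Finset K) : Finset K :=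
  Z.filter fun z => (∃ a ∈ T, a ≤ z) ∧ ∃ b ∈ T, z ≤ b

/-- `T` is a block of consecutive points of `Z`. -/
def IsConsecutiveIn (T Z : Finset K) : Prop := T ⊆ Z ∧ nodesInHull Z T ⊆ T

lemma nodesInHull_exchange_ssubset {Z T : Finset K} {c e : K} (hT : T ⊆ Z)
    (hc : c ∈ nodesInHull Z T) (he : e ∈ T) (hext : e ∉ nodesInHull Z ((insert c T).erase e)) :
    nodesInHull Z ((insert c T).erase e) ⊂ nodesInHull Z T := by
  simp only [nodesInHull, Finset.mem_filter] at hc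
  obtain ⟨-, ⟨a, ha, hac⟩, b, hb, hcb⟩ := hc
  refine Finset.ssubset_iff_subset_ne.2 ⟨fun z hz => ?_, fun h => hext ?_⟩
  · simp only [nodesInHull, Finset.mem_filter, Finset.mem_erase, Finset.mem_insert] at hz ⊢
    obtain ⟨hzZ, ⟨u, ⟨-, hu⟩, huz⟩, v, ⟨-, hv⟩, hzv⟩ := hz
    refine ⟨hzZ, ?_, ?_⟩
    · rcases hu with rfl | hu
      exacts [⟨a, ha, hac.trans huz⟩, ⟨u, hu, huz⟩]
    · rcases hv with rfl | hv
      exacts [⟨b, hb, hzv.trans hcb⟩, ⟨v, hv, hzv⟩]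
  · rw [h]
    exact Finset.mem_filter.2 ⟨hT he, ⟨e, he, le_rfl⟩, e, he, le_rfl⟩

lemma card_exchange {T : Finset K} {c e : K} (hc : c ∉ T) (he : e ∈ T) :
    ((insert c T).erase e).card = T.card := by
  rw [Finset.card_erase_of_mem (Finset.mem_insert_of_mem he), Finset.card_insert_of_notMem hc,
    Nat.add_sub_cancel]

variable [Field K] [IsStrictOrderedRing K]

-- Exchanging an endpoint of `T` for a skipped point of `Z` writes `[T; f]` as a convex combination
-- of divided differences over sets with smaller hulls.
lemma dividedDiff_nonneg_of_consecutive {Z : Finset K} {n : ℕ} {f : K → K}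
    (h : ∀ T, IsConsecutiveIn T Z → T.card = n → 0 ≤ dividedDiff T f)
    {T : Finset K} (hTZ : T ⊆ Z) (hTn : T.card = n) : 0 ≤ dividedDiff T f := by
  induction hm : (nodesInHull Z T).card using Nat.strong_induction_on generalizing T with
  | _ m ih =>
  by_cases hT : nodesInHull Z T ⊆ T
  · exact h T ⟨hTZ, hT⟩ hTn
  obtain ⟨c, hc, hcT⟩ := Finset.not_subset.1 hT
  have exchange_nonneg (e : K) (he : e ∈ T)
      (hext : e ∉ nodesInHull Z ((insert c T).erase e)) :
      0 ≤ dividedDiff ((insert c T).erase e) f :=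
    ih _ (hm ▸ Finset.card_lt_card (nodesInHull_exchange_ssubset hTZ hc he hext))
      ((Finset.erase_subset _ _).trans (Finset.insert_subset (Finset.mem_filter.1 hc).1 hTZ))
      ((card_exchange hcT he).trans hTn) rfl
  obtain ⟨-, ⟨a₀, ha₀, hac₀⟩, b₀, hb₀, hcb₀⟩ := Finset.mem_filter.1 hc
  obtain ⟨a, ha, hamin⟩ := T.exists_min_image id ⟨a₀, ha₀⟩
  obtain ⟨b, hb, hbmax⟩ := T.exists_max_image id ⟨b₀, hb₀⟩
  simp only [id] at hamin hbmax
  have hac : a < c := ((hamin _ ha₀).trans hac₀).lt_of_ne fun h => hcT (h ▸ ha)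
  have hcb : c < b := (hcb₀.trans (hbmax _ hb₀)).lt_of_ne fun h => hcT (h ▸ hb)
  have hleft : 0 ≤ dividedDiff ((insert c T).erase a) f := by
    refine exchange_nonneg a ha fun hmem => ?_
    obtain ⟨-, ⟨u, hu, hua⟩, -⟩ := Finset.mem_filter.1 hmem
    obtain ⟨hua', rfl | hu⟩ := by simpa using hu
    exacts [hua.not_gt hac, hua' (hua.antisymm (hamin u hu))]
  have hright : 0 ≤ dividedDiff ((insert c T).erase b) f := by
    refine exchange_nonneg b hb fun hmem => ?_
    obtain ⟨-, -, u, hu, hbu⟩ := Finset.mem_filter.1 hmem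
    obtain ⟨hub, rfl | hu⟩ := by simpa using hu
    exacts [hbu.not_gt hcb, hub ((hbmax u hu).antisymm hbu)]
  have key := dividedDiff_exchange (Finset.mem_insert_of_mem ha) (Finset.mem_insert_of_mem hb)
    (Finset.mem_insert_self c T) f
  rw [Finset.erase_insert hcT] at key
  refine nonneg_of_mul_nonneg_right (a := b - a) ?_ (sub_pos.2 (hac.trans hcb))
  rw [key]
  exact add_nonneg (mul_nonneg (sub_nonneg.2 hcb.le) hleft)
    (mul_nonneg (sub_nonneg.2 hac.le) hright)

end ConsecutiveNodes

section HigherMonotone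

/-- Higher order monotonicity on `I`: all divided differences of `f` over `k + 1` points of `I` are
nonnegative. Unlike in `kMonotoneOn`, the nodes are given as a finite set, so that they can be
exchanged and erased. -/
def HigherMonotoneOn (k : ℕ) (f : ℝ → ℝ) (I : Set ℝ) : Prop :=
  ∀ s : Finset ℝ, s.card = k + 1 → ↑s ⊆ I → 0 ≤ dividedDiff s f

lemma kMonotoneOn_iff_higherMonotoneOn {k : ℕ} {f : ℝ → ℝ} :
    kMonotoneOn k f ↔ HigherMonotoneOn k f (Ioo (-1) 1) := by
  constructor
  · intro hf s hs hsI
    have hrange : Finset.univ.map (s.orderEmbOfFin hs).toEmbedding = s := by simp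
    rw [← hrange, dividedDiff_map]
    exact hf _ (s.orderEmbOfFin hs).injective fun i => hsI (s.orderEmbOfFin_mem hs i)
  · intro hf x hx hxI
    have := hf (Finset.univ.map ⟨x, hx⟩) (by simp) (by simpa [range_subset_iff] using hxI)
    rwa [dividedDiff_map] at this

open scoped Topology

variable {k : ℕ} {f g : ℝ → ℝ} {I : Set ℝ} {c : ℝ}

namespace HigherMonotoneOn

lemma add (hf : HigherMonotoneOn k f I) (hg : HigherMonotoneOn k g I) :
    HigherMonotoneOn k (f + g) I := fun s hs hsI => by
  rw [map_add]
  exact add_nonneg (hf s hs hsI) (hg s hs hsI)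

lemma smul {r : ℝ} (hr : 0 ≤ r) (hf : HigherMonotoneOn k f I) :
    HigherMonotoneOn k (r • f) I := fun s hs hsI => by
  rw [map_smul]
  exact mul_nonneg hr (hf s hs hsI)

lemma sub_eval (hf : HigherMonotoneOn k f I) {P : Polynomial ℝ} (hP : P.degree < k) :
    HigherMonotoneOn k (fun x => f x - P.eval x) I := fun s hs hsI => by
  change 0 ≤ dividedDiff s (f - fun x => P.eval x)
  rw [map_sub, dividedDiff_eval_eq_zero hs hP, sub_zero]
  exact hf s hs hsI

lemma comp_neg (hf : HigherMonotoneOn k f I) :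
    HigherMonotoneOn k (fun x => (-1) ^ k * f (-x)) (-I) := fun s hs hsI => by
  have hneg := hf (s.map (Equiv.neg ℝ).toEmbedding) (by simpa using hs) fun x hx => by
    obtain ⟨y, hy, rfl⟩ := Finset.mem_map.1 hx
    exact hsI hy
  rw [dividedDiff_map_neg, hs, Nat.add_sub_cancel] at hneg
  change 0 ≤ dividedDiff s ((-1 : ℝ) ^ k • fun x => f (-x))
  rwa [map_smul]

end HigherMonotoneOn

lemma higherMonotoneOn_pow (k : ℕ) (I : Set ℝ) : HigherMonotoneOn k (fun x => x ^ k) I := by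
  intro s hs _
  have hdeg : (Polynomial.X ^ k : Polynomial ℝ).degree < s.card := by
    rw [Polynomial.degree_X_pow, hs]
    exact_mod_cast k.lt_succ_self
  have := dividedDiff_eval hdeg
  simp only [Polynomial.eval_pow, Polynomial.eval_X, hs, Nat.add_sub_cancel,
    Polynomial.coeff_X_pow_self] at this
  exact this ▸ zero_le_one

-- Otherwise `T` would contain all of `τ`, a point above `c` and a point below `τ`.
lemma IsConsecutiveIn.subset_union_Ioi_or_subset_Iic {Y τ T : Finset ℝ}
    (hT : IsConsecutiveIn T (Y ∪ τ)) (hcard : T.card ≤ τ.card + 1) (hτ : ↑τ ⊆ Iic c)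
    (hsep : ∀ y ∈ Y, y ∈ τ ∨ c < y ∨ ∀ t ∈ τ, y < t) :
    (T : Set ℝ) ⊆ ↑τ ∪ Ioi c ∨ (T : Set ℝ) ⊆ Iic c := by
  by_contra! hcon
  obtain ⟨⟨y, hyT, hy⟩, b, hbT, hb⟩ := And.intro (not_subset.1 hcon.1) (not_subset.1 hcon.2)
  simp only [mem_union, Finset.mem_coe, mem_Ioi, mem_Iic, not_or, not_lt, not_le] at hyT hy hbT hb
  have hyτ : ∀ t ∈ τ, y < t := by
    rcases Finset.mem_union.1 (hT.1 hyT) with hyY | hyτ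
    · exact ((hsep y hyY).resolve_left hy.1).resolve_left hy.2.not_gt
    · exact absurd hyτ hy.1
  have hτT : τ ⊆ T := fun t ht => hT.2 <| Finset.mem_filter.2
    ⟨Finset.mem_union_right _ ht, ⟨y, hyT, (hyτ t ht).le⟩, b, hbT, (hτ ht).trans hb.le⟩
  have hbτ : b ∉ τ := fun h => (hτ h).not_gt hb
  have hyb : y ∉ insert b τ := by
    rw [Finset.mem_insert, not_or]
    exact ⟨(hy.2.trans_lt hb).ne, hy.1⟩
  have hle := Finset.card_le_card (Finset.insert_subset hyT (Finset.insert_subset hbT hτT))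
  rw [Finset.card_insert_of_notMem hyb, Finset.card_insert_of_notMem hbτ] at hle
  omega

-- By the exchange argument it suffices to look at blocks of consecutive points of `Y ∪ τ`, on which
-- one of the two truncations agrees with `f` and the other vanishes.
lemma HigherMonotoneOn.dividedDiff_indicator_nonneg (hf : HigherMonotoneOn k f I) {τ Y : Finset ℝ}
    (hτk : τ.card = k) (hτI : ↑τ ⊆ I) (hτ : ↑τ ⊆ Iic c) (hfτ : ∀ t ∈ τ, f t = 0)
    (hYk : Y.card = k + 1) (hYI : ↑Y ⊆ I) (hsep : ∀ y ∈ Y, y ∈ τ ∨ c < y ∨ ∀ t ∈ τ, y < t) :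
    0 ≤ dividedDiff Y ((Ioi c).indicator f) ∧ 0 ≤ dividedDiff Y ((Iic c).indicator f) := by
  have hblock (T : Finset ℝ) (hT : IsConsecutiveIn T (Y ∪ τ)) (hTk : T.card = k + 1) :
      0 ≤ dividedDiff T ((Ioi c).indicator f) ∧ 0 ≤ dividedDiff T ((Iic c).indicator f) := by
    have hTf : 0 ≤ dividedDiff T f := hf T hTk fun x hx =>
      (Finset.mem_union.1 (hT.1 hx)).elim (fun h => hYI h) fun h => hτI h
    rcases hT.subset_union_Ioi_or_subset_Iic (by omega) hτ hsep with hTc | hTc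
    · have hIoi : EqOn ((Ioi c).indicator f) f T := fun x hx => by
        rcases hTc hx with hxτ | hxc
        · rw [hfτ x hxτ, indicator_of_notMem (notMem_Ioi.2 (hτ hxτ))]
        · exact indicator_of_mem hxc f
      have hIic : EqOn ((Iic c).indicator f) 0 T := fun x hx => by
        rcases hTc hx with hxτ | hxc
        · rw [indicator_of_mem (hτ hxτ), hfτ x hxτ, Pi.zero_apply]
        · exact indicator_of_notMem (notMem_Iic.2 hxc) f
      rw [dividedDiff_congr hIoi, dividedDiff_congr hIic, map_zero]
      exact ⟨hTf, le_rfl⟩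
    · have hIoi : EqOn ((Ioi c).indicator f) 0 T := fun x hx =>
        indicator_of_notMem (notMem_Ioi.2 (hTc hx)) f
      have hIic : EqOn ((Iic c).indicator f) f T := fun x hx => indicator_of_mem (hTc hx) f
      rw [dividedDiff_congr hIoi, dividedDiff_congr hIic, map_zero]
      exact ⟨le_rfl, hTf⟩
  exact ⟨dividedDiff_nonneg_of_consecutive (fun T hT hTk => (hblock T hT hTk).1)
      Finset.subset_union_left hYk,
    dividedDiff_nonneg_of_consecutive (fun T hT hTk => (hblock T hT hTk).2)
      Finset.subset_union_left hYk⟩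

lemma dividedDiff_indicator_Ioi_insert {x : ℝ} {N : Finset ℝ} (hx : c < x) (hN : ↑N ⊆ Iio c)
    (f : ℝ → ℝ) :
    dividedDiff (insert x N) ((Ioi c).indicator f) = f x / ∏ b ∈ N, (x - b) := by
  have hxN : x ∉ N := fun h => (hN h).not_gt hx
  rw [dividedDiff_apply, Finset.sum_insert hxN, Finset.erase_insert hxN,
    indicator_of_mem (mem_Ioi.2 hx), Finset.sum_eq_zero, add_zero]
  exact fun y hy => by rw [indicator_of_notMem (notMem_Ioi.2 (hN hy).le), zero_div]

lemma sub_eval_mem_Icc_of_dividedDiff_indicator_nonneg {P : Polynomial ℝ} (hP : P.degree < k)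
    {x : ℝ} (hx : c < x) {N : Finset ℝ} (hNk : N.card = k) (hN : ↑N ⊆ Iio c)
    (hIoi : 0 ≤ dividedDiff (insert x N) ((Ioi c).indicator fun y => f y - P.eval y))
    (hIic : 0 ≤ dividedDiff (insert x N) ((Iic c).indicator fun y => f y - P.eval y)) :
    f x - P.eval x ∈ Icc 0 (dividedDiff (insert x N) f * ∏ b ∈ N, (x - b)) := by
  have hxN : x ∉ N := fun h => (hN h).not_gt hx
  have hpos : 0 < ∏ b ∈ N, (x - b) := Finset.prod_pos fun b hb => sub_pos.2 ((hN hb).trans hx)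
  have hsum : dividedDiff (insert x N) ((Ioi c).indicator fun y => f y - P.eval y) +
      dividedDiff (insert x N) ((Iic c).indicator fun y => f y - P.eval y) =
        dividedDiff (insert x N) f := by
    rw [← map_add, ← compl_Ioi, indicator_self_add_compl]
    change dividedDiff _ (f - fun y => P.eval y) = _
    rw [map_sub, dividedDiff_eval_eq_zero (by rw [Finset.card_insert_of_notMem hxN, hNk]) hP,
      sub_zero]
  rw [dividedDiff_indicator_Ioi_insert hx hN] at hIoi hsum
  exact ⟨by simpa using (le_div_iff₀ hpos).1 hIoi, (div_le_iff₀ hpos).1 (by linarith)⟩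

lemma exists_tendsto_eval_of_eventually_mem_Icc {ι : Type*} {U : Ultrafilter ι}
    {P : ι → Polynomial ℝ} (hP : ∀ᶠ i in U, (P i).degree < k) {s : Finset ℝ} (hs : s.card = k)
    (hbdd : ∀ x ∈ s, ∃ a b, ∀ᶠ i in U, (P i).eval x ∈ Icc a b) :
    ∃ Q : Polynomial ℝ, Q.degree < k ∧
      ∀ y, Tendsto (fun i => (P i).eval y) U (𝓝 (Q.eval y)) := by
  have hlim (x : ℝ) (hx : x ∈ s) : ∃ v, Tendsto (fun i => (P i).eval x) U (𝓝 v) := by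
    obtain ⟨a, b, hab⟩ := hbdd x hx
    obtain ⟨v, -, hv⟩ := isCompact_Icc.ultrafilter_le_nhds' (U.map fun i => (P i).eval x) hab
    exact ⟨v, hv⟩
  choose! v hv using hlim
  refine ⟨Lagrange.interpolate s id v,
    hs ▸ Lagrange.degree_interpolate_lt (r := v) (injOn_id _), fun y => ?_⟩
  have hinterp : ∀ᶠ i in U, (Lagrange.interpolate s id fun x => (P i).eval x).eval y =
      (P i).eval y := by
    filter_upwards [hP] with i hi
    exact congrArg _ (Lagrange.eq_interpolate (injOn_id _) (hs ▸ hi)).symm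
  refine Tendsto.congr' hinterp ?_
  simp only [Lagrange.interpolate_apply, Polynomial.eval_finsetSum, Polynomial.eval_mul,
    Polynomial.eval_C]
  exact tendsto_finsetSum _ fun x hx => (hv x hx).mul_const _

lemma exists_finset_card_eq_subset_inter_Ioi (hI : I ∈ 𝓝[>] c) (n : ℕ) :
    ∃ s : Finset ℝ, s.card = n ∧ ↑s ⊆ I ∩ Ioi c := by
  obtain ⟨u, hu, huI⟩ := mem_nhdsGT_iff_exists_Ioo_subset.1 hI
  obtain ⟨s, hs, hsn⟩ := (Ioo_infinite (mem_Ioi.1 hu)).exists_subset_card_eq n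
  exact ⟨s, hsn, fun x hx => ⟨huI (hs hx), (hs hx).1⟩⟩

lemma exists_finset_card_eq_subset_inter_Iio (hI : I ∈ 𝓝[<] c) (n : ℕ) :
    ∃ s : Finset ℝ, s.card = n ∧ ↑s ⊆ I ∩ Iio c := by
  obtain ⟨u, hu, huI⟩ := mem_nhdsLT_iff_exists_Ioo_subset.1 hI
  obtain ⟨s, hs, hsn⟩ := (Ioo_infinite (mem_Iio.1 hu)).exists_subset_card_eq n
  exact ⟨s, hsn, fun x hx => ⟨huI (hs hx), (hs hx).2⟩⟩

lemma exists_finset_card_eq_mem_subset_Ioc (hk : 1 ≤ k) {a : ℝ} (ha : a < c) :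
    ∃ τ : Finset ℝ, τ.card = k ∧ c ∈ τ ∧ ↑τ ⊆ Ioc a c := by
  obtain ⟨s, hs, hsk⟩ := (Ioo_infinite ha).exists_subset_card_eq (k - 1)
  refine ⟨insert c s, ?_, Finset.mem_insert_self c s, ?_⟩
  · rw [Finset.card_insert_of_notMem fun h => (hs h).2.false, hsk, Nat.sub_add_cancel hk]
  · rw [Finset.coe_insert]
    exact insert_subset (right_mem_Ioc.2 ha) (hs.trans Ioo_subset_Ioc_self)

lemma HigherMonotoneOn.eventually_dividedDiff_indicator_sub_interpolate_nonneg
    (hf : HigherMonotoneOn k f I) (hI : I ∈ 𝓝 c) {τ : ℝ → Finset ℝ}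
    (hτ : ∀ a < c, (τ a).card = k ∧ c ∈ τ a ∧ ↑(τ a) ⊆ Ioc a c)
    {Y : Finset ℝ} (hYk : Y.card = k + 1) (hYI : ↑Y ⊆ I) :
    ∀ᶠ a in 𝓝[<] c,
      0 ≤ dividedDiff Y
        ((Ioi c).indicator fun y => f y - (Lagrange.interpolate (τ a) id f).eval y) ∧
      0 ≤ dividedDiff Y
        ((Iic c).indicator fun y => f y - (Lagrange.interpolate (τ a) id f).eval y) := by
  obtain ⟨l, hl, hlI⟩ := exists_Ioc_subset_of_mem_nhds hI (exists_lt c)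
  have hbelow : ∀ᶠ a in 𝓝[<] c, ∀ y ∈ Y, y < c → y < a := by
    simp only [Finset.eventually_all]
    intro y _
    by_cases hy : y < c
    · filter_upwards [Ioo_mem_nhdsLT hy] with a ha _ using ha.1
    · exact Eventually.of_forall fun a h => absurd h hy
  filter_upwards [hbelow, Ioo_mem_nhdsLT hl] with a haY ⟨hla, hac⟩
  obtain ⟨hcard, hcτ, hτa⟩ := hτ a hac
  have hdeg : (Lagrange.interpolate (τ a) id f).degree < k :=
    hcard ▸ Lagrange.degree_interpolate_lt (r := f) (injOn_id _)
  refine (hf.sub_eval hdeg).dividedDiff_indicator_nonneg hcard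
    (fun t ht => hlI ⟨hla.trans (hτa ht).1, (hτa ht).2⟩) (fun t ht => (hτa ht).2) (fun t ht => ?_)
    hYk hYI fun y hy => ?_
  · exact sub_eq_zero.2 (Lagrange.eval_interpolate_at_node (r := f) (injOn_id _) ht).symm
  · rcases lt_trichotomy y c with hyc | rfl | hyc
    · exact .inr (.inr fun t ht => (haY y hy hyc).trans (hτa ht).1)
    · exact .inl hcτ
    · exact .inr (.inl hyc)

lemma tendsto_dividedDiff {ι : Type*} {l : Filter ι} {F : ι → ℝ → ℝ} (s : Finset ℝ)
    (h : ∀ x ∈ s, Tendsto (F · x) l (𝓝 (f x))) :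
    Tendsto (fun i => dividedDiff s (F i)) l (𝓝 (dividedDiff s f)) := by
  simp only [dividedDiff_apply]
  exact tendsto_finsetSum _ fun x hx => (h x hx).div_const _

lemma HigherMonotoneOn.of_tendsto_sub_eval {ι : Type*} {l : Filter ι} [l.NeBot]
    {P : ι → Polynomial ℝ} {Q : Polynomial ℝ}
    (hPQ : ∀ y, Tendsto (fun i => (P i).eval y) l (𝓝 (Q.eval y))) {A : Set ℝ}
    (h : ∀ Y : Finset ℝ, Y.card = k + 1 → ↑Y ⊆ I →
      ∀ᶠ i in l, 0 ≤ dividedDiff Y (A.indicator fun y => f y - (P i).eval y)) :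
    HigherMonotoneOn k (A.indicator fun y => f y - Q.eval y) I := fun Y hYk hYI => by
  refine ge_of_tendsto (tendsto_dividedDiff Y fun x _ => ?_) (h Y hYk hYI)
  by_cases hx : x ∈ A
  · simpa only [indicator_of_mem hx] using (hPQ x).const_sub (f x)
  · simpa only [indicator_of_notMem hx] using tendsto_const_nhds

-- `P` is a limit of interpolants of `f` at nodes that cluster at `c` from the left.
theorem HigherMonotoneOn.exists_higherMonotoneOn_indicator_sub (hf : HigherMonotoneOn k f I)
    (hk : 1 ≤ k) (hI : I ∈ 𝓝 c) :
    ∃ P : Polynomial ℝ, P.degree < k ∧ P.eval c = f c ∧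
      HigherMonotoneOn k ((Ioi c).indicator fun y => f y - P.eval y) I ∧
      HigherMonotoneOn k ((Iic c).indicator fun y => f y - P.eval y) I := by
  choose! τ hτ using fun a (ha : a < c) => exists_finset_card_eq_mem_subset_Ioc hk ha
  set P : ℝ → Polynomial ℝ := fun a => Lagrange.interpolate (τ a) id f
  set U : Ultrafilter ℝ := Ultrafilter.of (𝓝[<] c)
  have hUc : ∀ᶠ a in U, a < c := Ultrafilter.of_le _ self_mem_nhdsWithin
  have hdeg : ∀ᶠ a in U, (P a).degree < k := hUc.mono fun a ha =>
    (hτ a ha).1 ▸ Lagrange.degree_interpolate_lt (r := f) (injOn_id _)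
  have htrunc (Y : Finset ℝ) (hYk : Y.card = k + 1) (hYI : ↑Y ⊆ I) :=
    (hf.eventually_dividedDiff_indicator_sub_interpolate_nonneg hI hτ hYk hYI).filter_mono
      (Ultrafilter.of_le _)
  obtain ⟨s, hsk, hs⟩ := exists_finset_card_eq_subset_inter_Ioi (nhdsWithin_le_nhds hI) k
  obtain ⟨N, hNk, hN⟩ := exists_finset_card_eq_subset_inter_Iio (nhdsWithin_le_nhds hI) k
  have hbdd : ∀ x ∈ s, ∃ a b, ∀ᶠ i in U, (P i).eval x ∈ Icc a b := by
    intro x hx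
    have hxN : x ∉ N := fun h => lt_asymm (mem_Ioi.1 (hs hx).2) (hN h).2
    have hins := htrunc (insert x N) (by rw [Finset.card_insert_of_notMem hxN, hNk]) (by
      rw [Finset.coe_insert]
      exact insert_subset (hs hx).1 fun y hy => (hN hy).1)
    refine ⟨f x - dividedDiff (insert x N) f * ∏ b ∈ N, (x - b), f x, ?_⟩
    filter_upwards [hins, hdeg] with a ha hPa
    obtain ⟨hlo, hhi⟩ := sub_eval_mem_Icc_of_dividedDiff_indicator_nonneg hPa (hs hx).2 hNk
      (fun y hy => (hN hy).2) ha.1 ha.2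
    exact ⟨sub_le_comm.1 hhi, sub_nonneg.1 hlo⟩
  obtain ⟨Q, hQ, hPQ⟩ := exists_tendsto_eval_of_eventually_mem_Icc hdeg hsk hbdd
  refine ⟨Q, hQ, tendsto_nhds_unique (hPQ c) (tendsto_const_nhds.congr' (hUc.mono fun a ha => ?_)),
    .of_tendsto_sub_eval hPQ fun Y hYk hYI => (htrunc Y hYk hYI).mono fun _ h => h.1,
    .of_tendsto_sub_eval hPQ fun Y hYk hYI => (htrunc Y hYk hYI).mono fun _ h => h.2⟩
  exact (Lagrange.eval_interpolate_at_node (r := f) (injOn_id _) (hτ a ha).2.1).symm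

end HigherMonotone

section PolynomialBound

variable {k : ℕ} {f : ℝ → ℝ} {P : Polynomial ℝ} {I : Set ℝ} {c d R : ℝ}

lemma abs_dividedDiff_le {s : Finset ℝ} (hd : 0 < d)
    (hs : (s : Set ℝ).Pairwise fun a b => d ≤ |a - b|) (f : ℝ → ℝ) :
    |dividedDiff s f| ≤ (∑ a ∈ s, |f a|) / d ^ (s.card - 1) := by
  rw [dividedDiff_apply, Finset.sum_div]
  refine (Finset.abs_sum_le_sum_abs _ _).trans (Finset.sum_le_sum fun a ha => ?_)
  rw [abs_div, Finset.abs_prod, ← Finset.card_erase_of_mem ha, ← Finset.prod_const]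
  gcongr with b hb
  exact hs ha (Finset.mem_of_mem_erase hb) (Finset.ne_of_mem_erase hb).symm

lemma abs_eval_basis_le {s : Finset ℝ} (hd : 0 < d)
    (hs : (s : Set ℝ).Pairwise fun a b => d ≤ |a - b|) {y : ℝ} (hR : ∀ a ∈ s, |y - a| ≤ R) {a : ℝ}
    (ha : a ∈ s) : |(Lagrange.basis s id a).eval y| ≤ (R / d) ^ (s.card - 1) := by
  rw [Lagrange.basis, Polynomial.eval_prod, Finset.abs_prod, ← Finset.card_erase_of_mem ha,
    ← Finset.prod_const]
  refine Finset.prod_le_prod (fun _ _ => abs_nonneg _) fun b hb => ?_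
  have hbs := Finset.mem_of_mem_erase hb
  simp only [Lagrange.basisDivisor, id, Polynomial.eval_mul, Polynomial.eval_C,
    Polynomial.eval_sub, Polynomial.eval_X, abs_mul, abs_inv]
  rw [← div_eq_inv_mul]
  exact div_le_div₀ ((abs_nonneg _).trans (hR b hbs)) (hR b hbs) hd
    (hs ha hbs (Finset.ne_of_mem_erase hb).symm)

lemma abs_eval_le_of_separated {s : Finset ℝ} (hP : P.degree < s.card) (hd : 0 < d)
    (hs : (s : Set ℝ).Pairwise fun a b => d ≤ |a - b|) {y : ℝ} (hR : ∀ a ∈ s, |y - a| ≤ R) :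
    |P.eval y| ≤ (R / d) ^ (s.card - 1) * ∑ a ∈ s, |P.eval a| := by
  have hinterp : P.eval y = ∑ a ∈ s, P.eval a * (Lagrange.basis s id a).eval y := by
    conv_lhs => rw [Lagrange.eq_interpolate (v := id) (injOn_id (s : Set ℝ)) hP,
      Lagrange.interpolate_apply, Polynomial.eval_finsetSum]
    simp only [Polynomial.eval_mul, Polynomial.eval_C, id]
  rw [hinterp, Finset.mul_sum]
  refine (Finset.abs_sum_le_sum_abs _ _).trans (Finset.sum_le_sum fun a ha => ?_)
  rw [abs_mul, mul_comm]
  gcongr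
  exact abs_eval_basis_le hd hs hR ha

lemma abs_eval_le_of_dividedDiff_indicator_nonneg (hP : P.degree < k) {x : ℝ} (hx : c < x)
    {N : Finset ℝ} (hNk : N.card = k) (hN : ↑N ⊆ Iio c)
    (hIoi : 0 ≤ dividedDiff (insert x N) ((Ioi c).indicator fun y => f y - P.eval y))
    (hIic : 0 ≤ dividedDiff (insert x N) ((Iic c).indicator fun y => f y - P.eval y))
    (hd : 0 < d) (hsep : (insert x N : Set ℝ).Pairwise fun a b => d ≤ |a - b|)
    (hR : ∀ b ∈ N, |x - b| ≤ R) :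
    |P.eval x| ≤ |f x| + (R / d) ^ k * (|f x| + ∑ b ∈ N, |f b|) := by
  have hxN : x ∉ N := fun h => (hN h).not_gt hx
  obtain ⟨hlo, hhi⟩ :=
    sub_eval_mem_Icc_of_dividedDiff_indicator_nonneg hP hx hNk hN hIoi hIic
  have hdiff : |dividedDiff (insert x N) f| ≤ (|f x| + ∑ b ∈ N, |f b|) / d ^ k := by
    have := abs_dividedDiff_le hd (s := insert x N) (by rwa [Finset.coe_insert]) f
    rwa [Finset.sum_insert hxN, Finset.card_insert_of_notMem hxN, hNk, Nat.add_sub_cancel] at this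
  have hprod : |∏ b ∈ N, (x - b)| ≤ R ^ k := by
    rw [Finset.abs_prod, ← hNk, ← Finset.prod_const]
    exact Finset.prod_le_prod (fun _ _ => abs_nonneg _) hR
  calc |P.eval x| ≤ |f x| + |f x - P.eval x| := by
        simpa using abs_sub (f x) (f x - P.eval x)
    _ ≤ |f x| + |dividedDiff (insert x N) f * ∏ b ∈ N, (x - b)| := by
        rw [abs_of_nonneg hlo]
        gcongr
        exact hhi.trans (le_abs_self _)
    _ ≤ |f x| + (|f x| + ∑ b ∈ N, |f b|) / d ^ k * R ^ k := by
        rw [abs_mul]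
        gcongr
    _ = |f x| + (R / d) ^ k * (|f x| + ∑ b ∈ N, |f b|) := by
        rw [div_pow]
        ring

lemma abs_eval_le_of_higherMonotoneOn_indicator_sub (hP : P.degree < k)
    (hIoi : HigherMonotoneOn k ((Ioi c).indicator fun y => f y - P.eval y) I)
    (hIic : HigherMonotoneOn k ((Iic c).indicator fun y => f y - P.eval y) I)
    {s N : Finset ℝ} (hsk : s.card = k) (hs : ↑s ⊆ I ∩ Ioi c) (hNk : N.card = k)
    (hN : ↑N ⊆ I ∩ Iio c) (hd : 0 < d) (hR : 0 ≤ R)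
    (hsep : (s ∪ N : Set ℝ).Pairwise fun a b => d ≤ |a - b|)
    (hsN : ∀ a ∈ s, ∀ b ∈ N, |a - b| ≤ R) {y : ℝ} (hy : ∀ a ∈ s, |y - a| ≤ R) :
    |P.eval y| ≤ (R / d) ^ (k - 1) * (k * (1 + (R / d) ^ k)) *
      (∑ a ∈ s, |f a| + ∑ b ∈ N, |f b|) := by
  have : 0 ≤ R / d := div_nonneg hR hd.le
  have hnode (a : ℝ) (ha : a ∈ s) :
      |P.eval a| ≤ (1 + (R / d) ^ k) * (∑ a ∈ s, |f a| + ∑ b ∈ N, |f b|) := by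
    have haN : a ∉ N := fun h => lt_asymm (mem_Ioi.1 (hs ha).2) (hN h).2
    have hcard : (insert a N).card = k + 1 := by rw [Finset.card_insert_of_notMem haN, hNk]
    have hsub : ↑(insert a N) ⊆ I := by
      rw [Finset.coe_insert]
      exact insert_subset (hs ha).1 fun b hb => (hN hb).1
    have hle := abs_eval_le_of_dividedDiff_indicator_nonneg hP (hs ha).2 hNk
      (fun b hb => (hN hb).2) (hIoi _ hcard hsub) (hIic _ hcard hsub) hd
      (hsep.mono (insert_subset (.inl ha) subset_union_right)) (hsN a ha)
    have hfa : |f a| ≤ ∑ a ∈ s, |f a| :=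
      Finset.single_le_sum (f := fun a => |f a|) (fun _ _ => abs_nonneg _) ha
    have hfN : 0 ≤ ∑ b ∈ N, |f b| := Finset.sum_nonneg fun _ _ => abs_nonneg _
    calc |P.eval a| ≤ |f a| + (R / d) ^ k * (|f a| + ∑ b ∈ N, |f b|) := hle
      _ ≤ (∑ a ∈ s, |f a| + ∑ b ∈ N, |f b|) +
          (R / d) ^ k * (∑ a ∈ s, |f a| + ∑ b ∈ N, |f b|) := by
        gcongr
        exact hfa.trans (le_add_of_nonneg_right hfN)
      _ = _ := by ring
  calc |P.eval y| ≤ (R / d) ^ (k - 1) * ∑ a ∈ s, |P.eval a| :=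
        hsk ▸ abs_eval_le_of_separated (hsk ▸ hP) hd (hsep.mono subset_union_left) hy
    _ ≤ (R / d) ^ (k - 1) *
        ∑ _a ∈ s, (1 + (R / d) ^ k) * (∑ a ∈ s, |f a| + ∑ b ∈ N, |f b|) := by
      gcongr with a ha
      exact hnode a ha
    _ = _ := by
      rw [Finset.sum_const, hsk, nsmul_eq_mul]
      ring

lemma pairwise_le_abs_sub_range_intCast_mul {x : ℝ} (hx : 0 ≤ x) :
    (range fun j : ℤ => (j : ℝ) * x).Pairwise fun a b => x ≤ |a - b| := by
  rintro _ ⟨i, rfl⟩ _ ⟨j, rfl⟩ hij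
  have hij' : (1 : ℝ) ≤ |(i : ℝ) - j| := by
    exact_mod_cast Int.one_le_abs (sub_ne_zero.2 fun h => hij (by rw [h]))
  rw [← sub_mul, abs_mul, abs_of_nonneg hx]
  exact le_mul_of_one_le_left hx hij'

lemma sum_Icc_erase_zero_eq_sum_image {x : ℝ} (hx : x ≠ 0) (F : ℝ → ℝ) :
    ∑ j ∈ (Finset.Icc (-k : ℤ) k).erase 0, F (j * x) =
      ∑ a ∈ (Finset.Icc 1 (k : ℤ)).image (fun j : ℤ => (j : ℝ) * x), F a +
        ∑ a ∈ (Finset.Icc (-k : ℤ) (-1)).image (fun j : ℤ => (j : ℝ) * x), F a := by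
  have hinj : Function.Injective fun j : ℤ => (j : ℝ) * x :=
    (mul_left_injective₀ hx).comp Int.cast_injective
  have hsplit : (Finset.Icc (-k : ℤ) k).erase 0 =
      Finset.Icc 1 (k : ℤ) ∪ Finset.Icc (-k : ℤ) (-1) := by
    ext j
    simp only [Finset.mem_erase, Finset.mem_Icc, Finset.mem_union]
    omega
  have hdisj : Disjoint (Finset.Icc 1 (k : ℤ)) (Finset.Icc (-k : ℤ) (-1)) :=
    Finset.disjoint_left.2 fun j => by simp only [Finset.mem_Icc]; omega
  rw [hsplit, Finset.sum_union hdisj, Finset.sum_image hinj.injOn, Finset.sum_image hinj.injOn]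

lemma abs_eval_le_sum_equidistant (hP : P.degree < k)
    (hIoi : HigherMonotoneOn k ((Ioi 0).indicator fun y => f y - P.eval y) (Ioo (-1) 1))
    (hIic : HigherMonotoneOn k ((Iic 0).indicator fun y => f y - P.eval y) (Ioo (-1) 1))
    {x : ℝ} (hx : 0 < x) (hkx : k * x < 1) {y : ℝ} (hy : y ∈ Icc (-1) 1) :
    |P.eval y| ≤ (2 / x) ^ (k - 1) * (k * (1 + (2 / x) ^ k)) *
      ∑ j ∈ (Finset.Icc (-k : ℤ) k).erase 0, |f (j * x)| := by
  have hcard (J : Finset ℤ) : (J.image fun j : ℤ => (j : ℝ) * x).card = J.card :=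
    Finset.card_image_of_injective _ ((mul_left_injective₀ hx.ne').comp Int.cast_injective)
  have hmem {j : ℤ} (hlo : -(k : ℤ) ≤ j) (hhi : j ≤ k) : (j : ℝ) * x ∈ Ioo (-1 : ℝ) 1 := by
    have hlo' : -(k : ℝ) * x ≤ j * x := by gcongr; exact_mod_cast hlo
    have hhi' : (j : ℝ) * x ≤ k * x := by gcongr; exact_mod_cast hhi
    constructor <;> linarith
  have hdist {u v : ℝ} (hu : u ∈ Icc (-1 : ℝ) 1) (hv : v ∈ Icc (-1 : ℝ) 1) : |u - v| ≤ 2 := by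
    rw [abs_sub_le_iff]
    constructor <;> linarith [hu.1, hu.2, hv.1, hv.2]
  have hpos {a : ℝ} (ha : a ∈ (Finset.Icc 1 (k : ℤ)).image fun j : ℤ => (j : ℝ) * x) :
      a ∈ Ioo (-1 : ℝ) 1 ∩ Ioi 0 := by
    obtain ⟨j, hj, rfl⟩ := Finset.mem_image.1 ha
    rw [Finset.mem_Icc] at hj
    exact ⟨hmem (by omega) hj.2, mul_pos (by exact_mod_cast hj.1) hx⟩
  have hneg {b : ℝ} (hb : b ∈ (Finset.Icc (-k : ℤ) (-1)).image fun j : ℤ => (j : ℝ) * x) :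
      b ∈ Ioo (-1 : ℝ) 1 ∩ Iio 0 := by
    obtain ⟨j, hj, rfl⟩ := Finset.mem_image.1 hb
    rw [Finset.mem_Icc] at hj
    exact ⟨hmem hj.1 (by omega), mul_neg_of_neg_of_pos (by exact_mod_cast (by omega : j < 0)) hx⟩
  rw [sum_Icc_erase_zero_eq_sum_image hx.ne' fun a => |f a|]
  refine abs_eval_le_of_higherMonotoneOn_indicator_sub hP hIoi hIic (by rw [hcard]; simp)
    (fun a => hpos) (by rw [hcard]; simp) (fun b => hneg) hx zero_le_two ?_
    (fun a ha b hb => hdist (Ioo_subset_Icc_self (hpos ha).1) (Ioo_subset_Icc_self (hneg hb).1))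
    fun a ha => hdist hy (Ioo_subset_Icc_self (hpos ha).1)
  rw [← Finset.coe_union, ← Finset.image_union, Finset.coe_image]
  exact (pairwise_le_abs_sub_range_intCast_mul hx.le).mono (image_subset_range _ _)

end PolynomialBound

section LpOn

variable {f g : ℝ → ℝ} {p : ℝ≥0∞} {a b : ℝ}

lemma LpOn_mono (hfg : ∀ x ∈ Icc a b, |f x| ≤ |g x|) : LpOn f p a b ≤ LpOn g p a b :=
  eLpNorm_mono_ae (ae_restrict_of_forall_mem measurableSet_Icc hfg)

lemma LpOn_const_mul (c : ℝ) (f : ℝ → ℝ) (p : ℝ≥0∞) (a b : ℝ) :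
    LpOn (fun x => c * f x) p a b = ‖c‖ₑ * LpOn f p a b :=
  eLpNorm_const_smul c f p _

lemma LpOn_add_le (hf : Measurable f) (hg : Measurable g) (hp : 1 ≤ p) :
    LpOn (fun x => f x + g x) p a b ≤ LpOn f p a b + LpOn g p a b :=
  eLpNorm_add_le hf.aestronglyMeasurable hg.aestronglyMeasurable hp

lemma LpOn_sum_le {ι : Type*} {s : Finset ι} {F : ι → ℝ → ℝ} (hF : ∀ i ∈ s, Measurable (F i))
    (hp : 1 ≤ p) : LpOn (fun x => ∑ i ∈ s, F i x) p a b ≤ ∑ i ∈ s, LpOn (F i) p a b := by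
  have hsum : (fun x => ∑ i ∈ s, F i x) = ∑ i ∈ s, F i := by ext x; simp
  rw [hsum]
  exact eLpNorm_sum_le (fun i hi => (hF i hi).aestronglyMeasurable) hp

lemma LpOn_comp_neg (f : ℝ → ℝ) (p : ℝ≥0∞) (a b : ℝ) :
    LpOn (fun x => f (-x)) p a b = LpOn f p (-b) (-a) := by
  have hneg : MeasurePreserving (fun x : ℝ => -x) := Measure.measurePreserving_neg volume
  have hrestrict := hneg.restrict_preimage (measurableSet_Icc (a := -b) (b := -a))
  have hpreimage : (fun x : ℝ => -x) ⁻¹' Icc (-b) (-a) = Icc a b := by ext x; simp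
  rw [hpreimage] at hrestrict
  rw [LpOn, LpOn, ← hrestrict.map_eq]
  exact ((MeasurableEquiv.neg ℝ).measurableEmbedding.eLpNorm_map_measure).symm

lemma map_mul_left_restrict_le {c a' b' : ℝ} (hc : 1 ≤ |c|)
    (hmaps : MapsTo (fun x => c * x) (Icc a b) (Icc a' b')) :
    (volume.restrict (Icc a b)).map (fun x => c * x) ≤ volume.restrict (Icc a' b') := by
  have hmeas : Measurable fun x : ℝ => c * x := measurable_const_mul c
  refine Measure.le_iff.2 fun s hs => ?_
  rw [Measure.map_apply hmeas hs, Measure.restrict_apply (hmeas hs), Measure.restrict_apply hs]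
  calc volume ((fun x => c * x) ⁻¹' s ∩ Icc a b)
      ≤ volume ((fun x => c * x) ⁻¹' (s ∩ Icc a' b')) :=
        measure_mono fun x hx => ⟨hx.1, hmaps hx.2⟩
    _ = ENNReal.ofReal |c⁻¹| * volume (s ∩ Icc a' b') :=
        Real.volume_preimage_mul_left (abs_pos.1 (one_pos.trans_le hc)) _
    _ ≤ volume (s ∩ Icc a' b') := by
        refine mul_le_of_le_one_left' ?_
        rw [ENNReal.ofReal_le_one, abs_inv]
        exact inv_le_one_of_one_le₀ hc

lemma LpOn_comp_mul_left_le (hf : Measurable f) {c a' b' : ℝ} (hc : 1 ≤ |c|)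
    (hmaps : MapsTo (fun x => c * x) (Icc a b) (Icc a' b')) :
    LpOn (fun x => f (c * x)) p a b ≤ LpOn f p a' b' :=
  (eLpNorm_map_measure hf.aestronglyMeasurable (measurable_const_mul c).aemeasurable).symm.trans_le
    (eLpNorm_mono_measure f (map_mul_left_restrict_le hc hmaps))

lemma LpOn_one_ne_zero (hp : p ≠ 0) (hab : a < b) : LpOn (fun _ => 1) p a b ≠ 0 := by
  have : (ae (volume.restrict (Icc a b))).NeBot := ae_neBot.2 (by simp [hab])
  rw [LpOn, Ne, eLpNorm_eq_zero_iff aestronglyMeasurable_const hp]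
  exact fun h => h.exists.elim fun _ => one_ne_zero

lemma LpOn_one_ne_top : LpOn (fun _ => 1) p a b ≠ ⊤ :=
  (memLp_const 1).eLpNorm_ne_top

end LpOn

section JacobiWeight

variable {p : ℝ≥0∞} {α β x : ℝ}

lemma jacobi_neg (α β x : ℝ) : jacobi α β (-x) = jacobi β α x := by
  rw [jacobi, jacobi, mul_comm, sub_neg_eq_add, ← sub_eq_add_neg]

lemma jacobi_nonneg (α β : ℝ) (hx : x ∈ Icc (-1) 1) : 0 ≤ jacobi α β x :=
  mul_nonneg (Real.rpow_nonneg (by linarith [hx.1]) _) (Real.rpow_nonneg (by linarith [hx.2]) _)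

lemma jacobi_pos (α β : ℝ) (hx : x ∈ Ioo (-1) 1) : 0 < jacobi α β x :=
  mul_pos (Real.rpow_pos_of_pos (by linarith [hx.1]) _)
    (Real.rpow_pos_of_pos (by linarith [hx.2]) _)

lemma measurable_jacobi (α β : ℝ) : Measurable (jacobi α β) := by
  unfold jacobi
  fun_prop

lemma continuousOn_jacobi (α β : ℝ) : ContinuousOn (jacobi α β) (Ioo (-1) 1) :=
  .mul (.rpow_const (by fun_prop) fun x hx => .inl (by linarith [hx.1]))
    (.rpow_const (by fun_prop) fun x hx => .inl (by linarith [hx.2]))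

lemma exists_pos_forall_le_jacobi (α β : ℝ) {a b : ℝ} (ha : -1 < a) (hb : b < 1) :
    ∃ m > 0, ∀ x ∈ Icc a b, m ≤ jacobi α β x :=
  have hsub : Icc a b ⊆ Ioo (-1) 1 := Icc_subset_Ioo ha hb
  isCompact_Icc.exists_forall_le' ((continuousOn_jacobi α β).mono hsub)
    fun _ hx => jacobi_pos α β (hsub hx)

lemma neg_one_lt_mul_toReal_of_mem_Jset (hα : α ∈ Jset p) (hp : p ≠ 0) (hp' : p ≠ ⊤) :
    -1 < α * p.toReal := by
  rw [Jset, if_neg hp', mem_Ioi] at hα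
  exact (div_lt_iff₀ (ENNReal.toReal_pos hp hp')).1 hα

lemma LpOn_one_add_rpow_ne_top (hp : p ≠ 0) (hα : α ∈ Jset p) :
    LpOn (fun x => (1 + x) ^ α) p (-1) 1 ≠ ⊤ := by
  rcases eq_or_ne p ⊤ with rfl | hp'
  · rw [Jset, if_pos rfl] at hα
    refine ne_top_of_le_ne_top (ENNReal.mul_ne_top enorm_ne_top LpOn_one_ne_top)
      ((LpOn_mono fun x hx => ?_).trans_eq (LpOn_const_mul (2 ^ α) (fun _ => 1) _ _ _))
    rw [mul_one, abs_of_nonneg (Real.rpow_nonneg (by linarith [hx.1]) _),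
      abs_of_nonneg (by positivity)]
    exact Real.rpow_le_rpow (by linarith [hx.1]) (by linarith [hx.2]) hα
  · have hmeas : Measurable fun x : ℝ => (1 + x) ^ α := by fun_prop
    have hint : IntegrableOn (fun x : ℝ => (1 + x) ^ (α * p.toReal)) (Icc (-1) 1) := by
      have := (intervalIntegral.intervalIntegrable_rpow'
        (neg_one_lt_mul_toReal_of_mem_Jset hα hp hp') (a := 0) (b := 2)).comp_add_left 1
      rw [integrableOn_Icc_iff_integrableOn_Ioc]
      norm_num at this
      rwa [intervalIntegrable_iff_integrableOn_Ioc_of_le (by norm_num)] at this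
    refine ((integrable_norm_rpow_iff hmeas.aestronglyMeasurable hp hp').1
      (hint.congr_fun (fun x hx => ?_) measurableSet_Icc)).eLpNorm_ne_top
    have hx : 0 ≤ 1 + x := by linarith [hx.1]
    simp only
    rw [Real.norm_of_nonneg (Real.rpow_nonneg hx _), Real.rpow_mul hx]

lemma LpOn_one_sub_rpow_ne_top (hp : p ≠ 0) (hβ : β ∈ Jset p) :
    LpOn (fun x => (1 - x) ^ β) p (-1) 1 ≠ ⊤ := by
  have hneg := LpOn_comp_neg (fun x => (1 + x) ^ β) p (-1) 1
  simp only [neg_neg, ← sub_eq_add_neg] at hneg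
  exact hneg ▸ LpOn_one_add_rpow_ne_top hp hβ

lemma rpow_le_two_rpow_abs (hx₁ : 1 ≤ x) (hx₂ : x ≤ 2) (β : ℝ) : x ^ β ≤ 2 ^ |β| :=
  (Real.rpow_le_rpow_of_exponent_le hx₁ (le_abs_self β)).trans
    (Real.rpow_le_rpow (by linarith) hx₂ (abs_nonneg β))

-- On each half of the interval, the factor that is singular at the far endpoint is bounded.
lemma jacobi_le (α β : ℝ) (hx : x ∈ Icc (-1) 1) :
    jacobi α β x ≤ 2 ^ |β| * (1 + x) ^ α + 2 ^ |α| * (1 - x) ^ β := by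
  have hα : 0 ≤ (1 + x) ^ α := Real.rpow_nonneg (by linarith [hx.1]) _
  have hβ : 0 ≤ (1 - x) ^ β := Real.rpow_nonneg (by linarith [hx.2]) _
  rcases le_total x 0 with hx0 | hx0
  · calc jacobi α β x = (1 - x) ^ β * (1 + x) ^ α := mul_comm _ _
      _ ≤ 2 ^ |β| * (1 + x) ^ α := by
        gcongr
        exact rpow_le_two_rpow_abs (by linarith) (by linarith [hx.1]) β
      _ ≤ _ := le_add_of_nonneg_right (by positivity)
  · calc jacobi α β x ≤ 2 ^ |α| * (1 - x) ^ β := by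
          unfold jacobi
          gcongr
          exact rpow_le_two_rpow_abs (by linarith) (by linarith [hx.2]) α
      _ ≤ _ := le_add_of_nonneg_left (by positivity)

lemma LpOn_jacobi_ne_top (hp : 1 ≤ p) (hα : α ∈ Jset p) (hβ : β ∈ Jset p) :
    LpOn (jacobi α β) p (-1) 1 ≠ ⊤ := by
  have hp0 : p ≠ 0 := (one_pos.trans_le hp).ne'
  refine ne_top_of_le_ne_top ?_ ((LpOn_mono fun x hx => ?_).trans
    (LpOn_add_le (f := fun x => 2 ^ |β| * (1 + x) ^ α) (g := fun x => 2 ^ |α| * (1 - x) ^ β)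
      (by fun_prop) (by fun_prop) hp))
  · rw [LpOn_const_mul, LpOn_const_mul]
    exact ENNReal.add_ne_top.2
      ⟨ENNReal.mul_ne_top enorm_ne_top (LpOn_one_add_rpow_ne_top hp0 hα),
        ENNReal.mul_ne_top enorm_ne_top (LpOn_one_sub_rpow_ne_top hp0 hβ)⟩
  · rw [abs_of_nonneg (jacobi_nonneg α β hx)]
    exact (jacobi_le α β hx).trans (le_abs_self _)

end JacobiWeight

section Modulus

variable {k : ℕ} {f g w : ℝ → ℝ} {δ : ℝ} {p : ℝ≥0∞}

lemma measurable_phiW : Measurable phiW := by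
  unfold phiW
  fun_prop

lemma phiW_neg (x : ℝ) : phiW (-x) = phiW x := by
  rw [phiW, neg_sq, phiW]

lemma measurable_symmDelta (k : ℕ) (hf : Measurable f) {h t : ℝ → ℝ} (hh : Measurable h)
    (ht : Measurable t) : Measurable fun x => symmDelta k (h x) f (t x) := by
  unfold symmDelta
  refine .ite (.inter ?_ ?_) (Finset.measurable_sum _ fun i _ => ?_) measurable_const
  · exact measurableSet_Icc.preimage (f := fun x => t x - k * h x / 2) (by fun_prop)
  · exact measurableSet_Icc.preimage (f := fun x => t x + k * h x / 2) (by fun_prop)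
  · exact (hf.comp (by fun_prop)).const_mul _

lemma symmDelta_add (k : ℕ) (h : ℝ) (f g : ℝ → ℝ) (x : ℝ) :
    symmDelta k h (fun y => f y + g y) x = symmDelta k h f x + symmDelta k h g x := by
  unfold symmDelta
  split_ifs
  · simp only [mul_add, Finset.sum_add_distrib]
  · rw [add_zero]

lemma symmDelta_const_mul (k : ℕ) (h c : ℝ) (f : ℝ → ℝ) (x : ℝ) :
    symmDelta k h (fun y => c * f y) x = c * symmDelta k h f x := by
  unfold symmDelta
  split_ifs
  · simp only [mul_left_comm _ c, Finset.mul_sum]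
  · rw [mul_zero]

lemma symmDelta_eval {P : Polynomial ℝ} (hP : P.degree < k) (h x : ℝ) :
    symmDelta k h (fun y => P.eval y) x = 0 := by
  rcases eq_or_ne P 0 with rfl | hP0
  · simp [symmDelta]
  unfold symmDelta
  split_ifs
  swap
  · rfl
  set L : Polynomial ℝ := .C h * .X + .C (x - k * h / 2) with hL
  have hdeg : (P.comp L).natDegree < k :=
    calc (P.comp L).natDegree ≤ P.natDegree * L.natDegree := Polynomial.natDegree_comp_le
      _ ≤ P.natDegree * 1 := Nat.mul_le_mul_left _ Polynomial.natDegree_linear_le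
      _ < k := by rwa [mul_one, Polynomial.natDegree_lt_iff_degree_lt hP0]
  have hdiff := congrFun (Polynomial.fwdDiff_iter_eq_zero_of_degree_lt hdeg) 0
  rw [fwdDiff_iter_eq_sum_shift, Pi.zero_apply] at hdiff
  rw [← hdiff]
  refine Finset.sum_congr rfl fun i _ => ?_
  have hnode : L.eval (0 + i • 1) = x - k * h / 2 + i * h := by
    simp only [hL, Polynomial.eval_add, Polynomial.eval_mul, Polynomial.eval_C, Polynomial.eval_X,
      zero_add, nsmul_one]
    ring
  rw [Polynomial.eval_comp, hnode, zsmul_eq_mul]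
  push_cast
  ring

lemma omegaDT_add_le (hw : Measurable w) (hf : Measurable f) (hg : Measurable g) (hp : 1 ≤ p) :
    omegaDT k (fun x => f x + g x) δ w p ≤ omegaDT k f δ w p + omegaDT k g δ w p := by
  have hsymm {h t : ℝ → ℝ} (hh : Measurable h) (ht : Measurable t) (a b : ℝ) :
      LpOn (fun x => w x * symmDelta k (h x) (fun y => f y + g y) (t x)) p a b ≤
        LpOn (fun x => w x * symmDelta k (h x) f (t x)) p a b +
          LpOn (fun x => w x * symmDelta k (h x) g (t x)) p a b := by
    simp only [symmDelta_add, mul_add]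
    exact LpOn_add_le (hw.mul (measurable_symmDelta k hf hh ht))
      (hw.mul (measurable_symmDelta k hg hh ht)) hp
  have hMain : OmegaMain k (fun x => f x + g x) δ w p ≤
      OmegaMain k f δ w p + OmegaMain k g δ w p :=
    iSup₂_le fun h hh => (hsymm (measurable_phiW.const_mul h) measurable_id _ _).trans
      (add_le_add (le_iSup₂_of_le h hh le_rfl) (le_iSup₂_of_le h hh le_rfl))
  have hFwd : OmegaFwd k (fun x => f x + g x) δ w p ≤
      OmegaFwd k f δ w p + OmegaFwd k g δ w p :=
    iSup₂_le fun h hh => (hsymm measurable_const (measurable_id.add_const _) _ _).trans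
      (add_le_add (le_iSup₂_of_le h hh le_rfl) (le_iSup₂_of_le h hh le_rfl))
  have hBwd : OmegaBwd k (fun x => f x + g x) δ w p ≤
      OmegaBwd k f δ w p + OmegaBwd k g δ w p :=
    iSup₂_le fun h hh => (hsymm measurable_const (measurable_id.sub_const _) _ _).trans
      (add_le_add (le_iSup₂_of_le h hh le_rfl) (le_iSup₂_of_le h hh le_rfl))
  calc omegaDT k (fun x => f x + g x) δ w p
      ≤ (OmegaMain k f δ w p + OmegaMain k g δ w p) + (OmegaFwd k f δ w p + OmegaFwd k g δ w p) +
          (OmegaBwd k f δ w p + OmegaBwd k g δ w p) := add_le_add (add_le_add hMain hFwd) hBwd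
    _ = omegaDT k f δ w p + omegaDT k g δ w p := by
      unfold omegaDT
      ring

lemma omegaDT_const_mul (k : ℕ) (c : ℝ) (f : ℝ → ℝ) (δ : ℝ) (w : ℝ → ℝ) (p : ℝ≥0∞) :
    omegaDT k (fun x => c * f x) δ w p = ‖c‖ₑ * omegaDT k f δ w p := by
  simp only [omegaDT, OmegaMain, OmegaFwd, OmegaBwd, symmDelta_const_mul, mul_left_comm _ c,
    LpOn_const_mul, mul_add, ENNReal.mul_iSup]

lemma omegaDT_sub_eval {P : Polynomial ℝ} (hP : P.degree < k) (f : ℝ → ℝ) (δ : ℝ) (w : ℝ → ℝ)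
    (p : ℝ≥0∞) :
    omegaDT k (fun x => f x - P.eval x) δ w p = omegaDT k f δ w p := by
  have hsymm (h x : ℝ) : symmDelta k h (fun y => f y - P.eval y) x = symmDelta k h f x := by
    have hadd := symmDelta_add k h (fun y => f y - P.eval y) (fun y => P.eval y) x
    simp only [sub_add_cancel, symmDelta_eval hP, add_zero] at hadd
    exact hadd.symm
  simp only [omegaDT, OmegaMain, OmegaFwd, OmegaBwd, hsymm]

end Modulus

section Reflection

variable {k : ℕ} {f : ℝ → ℝ}

/-- The reflection `x ↦ (-1)^k f(-x)` of `f` about the origin, whose sign is chosen so that it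
preserves `k`-monotonicity. -/
def reflect (k : ℕ) (f : ℝ → ℝ) (x : ℝ) : ℝ := (-1) ^ k * f (-x)

lemma measurable_reflect (k : ℕ) (hf : Measurable f) : Measurable (reflect k f) :=
  (hf.comp measurable_neg).const_mul _

lemma kMonotoneOn_reflect (hf : kMonotoneOn k f) : kMonotoneOn k (reflect k f) := by
  rw [kMonotoneOn_iff_higherMonotoneOn] at hf ⊢
  have hneg := hf.comp_neg
  rwa [neg_Ioo, neg_neg] at hneg

lemma symmDelta_reflect (k : ℕ) (h : ℝ) (f : ℝ → ℝ) (x : ℝ) :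
    symmDelta k h (reflect k f) x = symmDelta k h f (-x) := by
  have hmem : (x - k * h / 2 ∈ Icc (-1 : ℝ) 1 ∧ x + k * h / 2 ∈ Icc (-1 : ℝ) 1) ↔
      (-x - k * h / 2 ∈ Icc (-1 : ℝ) 1 ∧ -x + k * h / 2 ∈ Icc (-1 : ℝ) 1) := by
    simp only [mem_Icc]
    constructor <;> rintro ⟨⟨_, _⟩, _, _⟩ <;> refine ⟨⟨?_, ?_⟩, ?_, ?_⟩ <;> linarith
  unfold symmDelta
  rw [if_congr hmem ?_ rfl, ← Finset.sum_range_reflect]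
  refine Finset.sum_congr rfl fun i hi => ?_
  have hik : i ≤ k := Nat.lt_succ_iff.1 (Finset.mem_range.1 hi)
  have hsign : (-1 : ℝ) ^ (k - i) * (-1) ^ k = (-1) ^ i := by
    rw [← pow_sub_mul_pow (-1 : ℝ) hik, ← mul_assoc, ← mul_pow, neg_one_mul, neg_neg, one_pow,
      one_mul]
  have hnode : -(x - k * h / 2 + i * h) = -x - k * h / 2 + (k - i : ℝ) * h := by ring
  rw [Nat.add_sub_cancel, Nat.choose_symm hik, Nat.sub_sub_self hik, reflect, Nat.cast_sub hik,
    hnode, ← hsign]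
  ring

lemma omegaDT_reflect (k : ℕ) (f : ℝ → ℝ) (δ : ℝ) (w : ℝ → ℝ) (p : ℝ≥0∞) :
    omegaDT k (reflect k f) δ (fun x => w (-x)) p = omegaDT k f δ w p := by
  have hMain : OmegaMain k (reflect k f) δ (fun x => w (-x)) p = OmegaMain k f δ w p := by
    refine biSup_congr fun h _ => ?_
    have hneg := LpOn_comp_neg (fun x => w x * symmDelta k (h * phiW x) f x) p
      (-1 + 2 * (k : ℝ) ^ 2 * h ^ 2) (1 - 2 * (k : ℝ) ^ 2 * h ^ 2)
    simp only [phiW_neg, ← symmDelta_reflect] at hneg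
    rw [hneg]
    congr 1 <;> ring
  have hFwd : OmegaFwd k (reflect k f) δ (fun x => w (-x)) p = OmegaBwd k f δ w p := by
    refine biSup_congr fun h _ => ?_
    have hneg := LpOn_comp_neg (fun x => w x * symmDelta k h f (x - k * h / 2)) p
      (-1) (-1 + 2 * (k : ℝ) ^ 2 * δ ^ 2)
    simp only [← neg_add', ← symmDelta_reflect] at hneg
    rw [hneg]
    congr 1 <;> ring
  have hBwd : OmegaBwd k (reflect k f) δ (fun x => w (-x)) p = OmegaFwd k f δ w p := by
    refine biSup_congr fun h _ => ?_
    have hneg := LpOn_comp_neg (fun x => w x * symmDelta k h f (x + k * h / 2)) p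
      (1 - 2 * (k : ℝ) ^ 2 * δ ^ 2) 1
    simp only [neg_add_eq_sub, ← neg_sub _ (k * h / 2), ← symmDelta_reflect] at hneg
    rw [hneg]
    congr 1
    ring
  rw [omegaDT, omegaDT, hMain, hFwd, hBwd, add_right_comm]

lemma omegaDT_reflect_jacobi (k : ℕ) (f : ℝ → ℝ) (δ α β : ℝ) (p : ℝ≥0∞) :
    omegaDT k (reflect k f) δ (jacobi β α) p = omegaDT k f δ (jacobi α β) p := by
  simpa only [jacobi_neg] using omegaDT_reflect k f δ (jacobi α β) p

end Reflection

section JacobiNorm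

variable {f g : ℝ → ℝ} {p : ℝ≥0∞} {α β : ℝ}

/-- The weighted norm `‖w_{α,β} f‖_p` on `[-1,1]`, for which `BSet p α β` is the unit sphere. -/
def jacobiNorm (p : ℝ≥0∞) (α β : ℝ) (f : ℝ → ℝ) : ℝ≥0∞ :=
  LpOn (fun x => jacobi α β x * f x) p (-1) 1

lemma jacobiNorm_mono (hfg : ∀ x ∈ Icc (-1) 1, |f x| ≤ |g x|) :
    jacobiNorm p α β f ≤ jacobiNorm p α β g :=
  LpOn_mono fun x hx => by
    rw [abs_mul, abs_mul]
    exact mul_le_mul_of_nonneg_left (hfg x hx) (abs_nonneg _)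

lemma jacobiNorm_indicator_le (s : Set ℝ) : jacobiNorm p α β (s.indicator f) ≤ jacobiNorm p α β f :=
  jacobiNorm_mono fun x _ => norm_indicator_le_norm_self f x

lemma jacobiNorm_const_mul (p : ℝ≥0∞) (α β c : ℝ) (f : ℝ → ℝ) :
    jacobiNorm p α β (fun x => c * f x) = ‖c‖ₑ * jacobiNorm p α β f := by
  simp only [jacobiNorm, mul_left_comm _ c, LpOn_const_mul]

lemma jacobiNorm_sub_le (hf : Measurable f) (hg : Measurable g) (hp : 1 ≤ p) :
    jacobiNorm p α β (fun x => f x - g x) ≤ jacobiNorm p α β f + jacobiNorm p α β g := by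
  simp only [jacobiNorm, mul_sub]
  exact eLpNorm_sub_le ((measurable_jacobi α β).mul hf).aestronglyMeasurable
    ((measurable_jacobi α β).mul hg).aestronglyMeasurable hp

lemma jacobiNorm_add_eq_right (hf : Measurable f) (hp : p ≠ 0) (hf0 : jacobiNorm p α β f = 0)
    (g : ℝ → ℝ) : jacobiNorm p α β (fun x => f x + g x) = jacobiNorm p α β g := by
  have hzero := (eLpNorm_eq_zero_iff
    ((measurable_jacobi α β).mul hf).aestronglyMeasurable hp).1 hf0
  refine eLpNorm_congr_ae (hzero.mono fun x hx => ?_)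
  simp only [Pi.zero_apply, Pi.mul_apply] at hx
  simp only [mul_add, hx, zero_add]

lemma jacobiNorm_le_mul_LpOn_jacobi {M : ℝ≥0∞} (hM : M ≠ ⊤)
    (hf : ∀ x ∈ Icc (-1) 1, ‖f x‖ₑ ≤ M) :
    jacobiNorm p α β f ≤ M * LpOn (jacobi α β) p (-1) 1 := by
  lift M to NNReal using hM
  refine eLpNorm_le_nnreal_smul_eLpNorm_of_ae_le_mul
    (ae_restrict_of_forall_mem measurableSet_Icc fun x hx => ?_) p
  rw [nnnorm_mul, mul_comm]
  gcongr
  exact ENNReal.coe_le_coe.1 (hf x hx)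

lemma jacobiNorm_reflect (k : ℕ) (p : ℝ≥0∞) (α β : ℝ) (f : ℝ → ℝ) :
    jacobiNorm p β α (reflect k f) = jacobiNorm p α β f := by
  have hneg := LpOn_comp_neg (fun x => jacobi α β x * f x) p (-1) 1
  simp only [jacobi_neg, neg_neg] at hneg
  have hsign : ‖(-1 : ℝ) ^ k‖ₑ = 1 := by simp
  rw [jacobiNorm, jacobiNorm, ← hneg, ← one_mul (LpOn (fun x => _ * f (-x)) _ _ _), ← hsign,
    ← LpOn_const_mul]
  simp only [reflect, mul_left_comm]

lemma exists_LpOn_le_mul_jacobiNorm (p : ℝ≥0∞) (α β : ℝ) {a b : ℝ} (ha : -1 < a) (hb : b < 1) :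
    ∃ K ≠ ⊤, ∀ f, LpOn f p a b ≤ K * jacobiNorm p α β f := by
  obtain ⟨m, hm, hle⟩ := exists_pos_forall_le_jacobi α β ha hb
  refine ⟨‖m⁻¹‖ₑ, enorm_ne_top, fun f => ?_⟩
  calc LpOn f p a b ≤ LpOn (fun x => m⁻¹ * (jacobi α β x * f x)) p a b :=
        LpOn_mono fun x hx => by
          rw [abs_mul, abs_mul, abs_of_pos (inv_pos.2 hm), ← mul_assoc]
          exact le_mul_of_one_le_left (abs_nonneg _)
            ((one_le_inv_mul₀ hm).2 ((hle x hx).trans (le_abs_self _)))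
    _ = ‖m⁻¹‖ₑ * LpOn (fun x => jacobi α β x * f x) p a b := LpOn_const_mul _ _ _ _ _
    _ ≤ ‖m⁻¹‖ₑ * jacobiNorm p α β f := by
        gcongr
        exact eLpNorm_mono_measure _ (Measure.restrict_mono_set _ (Icc_subset_Icc ha.le hb.le))

end JacobiNorm

section PolynomialNormBound

variable {k : ℕ} {f : ℝ → ℝ} {P : Polynomial ℝ} {p : ℝ≥0∞} {y : ℝ}

lemma abs_eval_le_sum_of_mem_Icc (hk : 1 ≤ k) (hP : P.degree < k)
    (hIoi : HigherMonotoneOn k ((Ioi 0).indicator fun y => f y - P.eval y) (Ioo (-1) 1))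
    (hIic : HigherMonotoneOn k ((Iic 0).indicator fun y => f y - P.eval y) (Ioo (-1) 1))
    {x : ℝ} (hx : x ∈ Icc (1 / (4 * k : ℝ)) (1 / (2 * k))) (hy : y ∈ Icc (-1) 1) :
    |P.eval y| ≤ (8 * k) ^ (k - 1) * (k * (1 + (8 * k) ^ k)) *
      ∑ j ∈ (Finset.Icc (-k : ℤ) k).erase 0, |f (j * x)| := by
  have : (0 : ℝ) < k := by exact_mod_cast hk
  have hx0 : 0 < x := lt_of_lt_of_le (by positivity) hx.1
  have hkx : k * x < 1 := by
    have := (le_div_iff₀ (by positivity)).1 hx.2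
    linarith
  have hinv : 2 / x ≤ 8 * k := by
    have := (div_le_iff₀ (by positivity)).1 hx.1
    rw [div_le_iff₀ hx0]
    linarith
  refine (abs_eval_le_sum_equidistant hP hIoi hIic hx0 hkx hy).trans ?_
  gcongr

lemma LpOn_comp_intCast_mul_le (hf : Measurable f) (hk : 1 ≤ k) {j : ℤ}
    (hj : j ∈ (Finset.Icc (-k : ℤ) k).erase 0) :
    LpOn (fun x => |f (j * x)|) p (1 / (4 * k)) (1 / (2 * k)) ≤ LpOn f p (-(1 / 2)) (1 / 2) := by
  obtain ⟨hj0, hjk⟩ := Finset.mem_erase.1 hj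
  have : (0 : ℝ) < k := by exact_mod_cast hk
  have hj1 : (1 : ℝ) ≤ |(j : ℝ)| := by exact_mod_cast Int.one_le_abs hj0
  have hjk' : |(j : ℝ)| ≤ k := by exact_mod_cast abs_le.2 (Finset.mem_Icc.1 hjk)
  have hmaps : MapsTo (fun x : ℝ => j * x) (Icc (1 / (4 * k)) (1 / (2 * k)))
      (Icc (-(1 / 2)) (1 / 2)) := fun x hx => abs_le.1 <| by
    have hx0 : 0 ≤ x := le_trans (by positivity) hx.1
    calc |j * x| = |(j : ℝ)| * x := by rw [abs_mul, abs_of_nonneg hx0]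
      _ ≤ k * (1 / (2 * k)) := by gcongr; exact hx.2
      _ = 1 / 2 := by field_simp
  exact (LpOn_mono fun x _ => (abs_abs _).le).trans (LpOn_comp_mul_left_le hf hj1 hmaps)

-- Average the pointwise bound in `L^p` over the spacing `x` of the nodes.
lemma enorm_eval_mul_LpOn_one_le (hk : 1 ≤ k) (hp : 1 ≤ p) (hf : Measurable f) (hP : P.degree < k)
    (hIoi : HigherMonotoneOn k ((Ioi 0).indicator fun y => f y - P.eval y) (Ioo (-1) 1))
    (hIic : HigherMonotoneOn k ((Iic 0).indicator fun y => f y - P.eval y) (Ioo (-1) 1))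
    (hy : y ∈ Icc (-1) 1) :
    ‖P.eval y‖ₑ * LpOn (fun _ => 1) p (1 / (4 * k)) (1 / (2 * k)) ≤
      ‖(8 * k : ℝ) ^ (k - 1) * (k * (1 + (8 * k) ^ k))‖ₑ *
        (((Finset.Icc (-k : ℤ) k).erase 0).card * LpOn f p (-(1 / 2)) (1 / 2)) := by
  set J := (Finset.Icc (-k : ℤ) k).erase 0
  set C : ℝ := (8 * k) ^ (k - 1) * (k * (1 + (8 * k) ^ k))
  calc ‖P.eval y‖ₑ * LpOn (fun _ => 1) p (1 / (4 * k)) (1 / (2 * k))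
      = LpOn (fun _ => P.eval y * 1) p (1 / (4 * k)) (1 / (2 * k)) :=
        (LpOn_const_mul _ _ _ _ _).symm
    _ ≤ LpOn (fun x => C * ∑ j ∈ J, |f (j * x)|) p (1 / (4 * k)) (1 / (2 * k)) :=
        LpOn_mono fun x hx => by
          rw [mul_one]
          exact (abs_eval_le_sum_of_mem_Icc hk hP hIoi hIic hx hy).trans (le_abs_self _)
    _ = ‖C‖ₑ * LpOn (fun x => ∑ j ∈ J, |f (j * x)|) p (1 / (4 * k)) (1 / (2 * k)) :=
        LpOn_const_mul _ _ _ _ _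
    _ ≤ ‖C‖ₑ * ∑ j ∈ J, LpOn (fun x => |f (j * x)|) p (1 / (4 * k)) (1 / (2 * k)) := by
        gcongr
        exact LpOn_sum_le (fun j _ => (hf.comp (measurable_const_mul _)).abs) hp
    _ ≤ ‖C‖ₑ * ∑ _j ∈ J, LpOn f p (-(1 / 2)) (1 / 2) := by
        gcongr with j hj
        exact LpOn_comp_intCast_mul_le hf hk hj
    _ = ‖C‖ₑ * (J.card * LpOn f p (-(1 / 2)) (1 / 2)) := by
        rw [Finset.sum_const, nsmul_eq_mul]

lemma exists_enorm_eval_le_mul_jacobiNorm (hk : 1 ≤ k) (hp : 1 ≤ p) (α β : ℝ) :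
    ∃ K ≠ ⊤, ∀ (f : ℝ → ℝ) (P : Polynomial ℝ), Measurable f → P.degree < k →
      HigherMonotoneOn k ((Ioi 0).indicator fun y => f y - P.eval y) (Ioo (-1) 1) →
      HigherMonotoneOn k ((Iic 0).indicator fun y => f y - P.eval y) (Ioo (-1) 1) →
      ∀ y ∈ Icc (-1) 1, ‖P.eval y‖ₑ ≤ K * jacobiNorm p α β f := by
  obtain ⟨K, hK, hfK⟩ := exists_LpOn_le_mul_jacobiNorm p α β (a := -(1 / 2)) (b := 1 / 2)
    (by norm_num) (by norm_num)
  have : (0 : ℝ) < k := by exact_mod_cast hk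
  set D := LpOn (fun _ => 1) p (1 / (4 * k)) (1 / (2 * k))
  have hD0 : D ≠ 0 := LpOn_one_ne_zero (one_pos.trans_le hp).ne' (by gcongr; norm_num)
  have hD : D ≠ ⊤ := LpOn_one_ne_top
  set C : ℝ := (8 * k) ^ (k - 1) * (k * (1 + (8 * k) ^ k))
  set J := (Finset.Icc (-k : ℤ) k).erase 0
  refine ⟨‖C‖ₑ * (J.card * K) / D, ENNReal.div_ne_top (ENNReal.mul_ne_top enorm_ne_top
    (ENNReal.mul_ne_top (ENNReal.natCast_ne_top _) hK)) hD0, fun f P hf hP hIoi hIic y hy => ?_⟩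
  calc ‖P.eval y‖ₑ ≤ ‖C‖ₑ * (J.card * LpOn f p (-(1 / 2)) (1 / 2)) / D :=
        (ENNReal.le_div_iff_mul_le (.inl hD0) (.inl hD)).2
          (enorm_eval_mul_LpOn_one_le hk hp hf hP hIoi hIic hy)
    _ ≤ ‖C‖ₑ * (J.card * (K * jacobiNorm p α β f)) / D := by
        gcongr
        exact hfK f
    _ = ‖C‖ₑ * (J.card * K) / D * jacobiNorm p α β f := by
        simp only [div_eq_mul_inv]
        ring

end PolynomialNormBound

section Decomposition

variable {k : ℕ} {f g : ℝ → ℝ} {p : ℝ≥0∞} {α β : ℝ}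

lemma const_mul_mem_MPlus (hf : f ∈ MPlus k) {r : ℝ} (hr : 0 ≤ r) :
    (fun x => r * f x) ∈ MPlus k := by
  refine ⟨?_, fun x hx hx0 => by simp only [hf.2 x hx hx0, mul_zero]⟩
  rw [kMonotoneOn_iff_higherMonotoneOn]
  exact (kMonotoneOn_iff_higherMonotoneOn.1 hf.1).smul hr

lemma add_mem_MPlus (hf : f ∈ MPlus k) (hg : g ∈ MPlus k) : (fun x => f x + g x) ∈ MPlus k := by
  refine ⟨?_, fun x hx hx0 => by simp only [hf.2 x hx hx0, hg.2 x hx hx0, add_zero]⟩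
  rw [kMonotoneOn_iff_higherMonotoneOn]
  exact (kMonotoneOn_iff_higherMonotoneOn.1 hf.1).add (kMonotoneOn_iff_higherMonotoneOn.1 hg.1)

lemma indicator_Ioi_mem_MPlus (hf : HigherMonotoneOn k ((Ioi 0).indicator f) (Ioo (-1) 1)) :
    (Ioi 0).indicator f ∈ MPlus k :=
  ⟨kMonotoneOn_iff_higherMonotoneOn.2 hf, fun _ _ hx => indicator_of_notMem (notMem_Ioi.2 hx) f⟩

lemma reflect_indicator_Iic_mem_MPlus
    (hf : HigherMonotoneOn k ((Iic 0).indicator f) (Ioo (-1) 1)) (hf0 : f 0 = 0) :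
    reflect k ((Iic 0).indicator f) ∈ MPlus k := by
  refine ⟨kMonotoneOn_reflect (kMonotoneOn_iff_higherMonotoneOn.2 hf), fun x _ hx => ?_⟩
  rw [reflect, mul_eq_zero_of_right]
  rcases hx.lt_or_eq with hx | rfl
  · exact indicator_of_notMem (by simpa using hx) f
  · simp [hf0]

lemma exists_decomposition_MPlus (hk : 1 ≤ k) (hp : 1 ≤ p) (hα : α ∈ Jset p) (hβ : β ∈ Jset p) :
    ∃ K ≠ ⊤, ∀ f, Measurable f → kMonotoneOn k f → jacobiNorm p α β f = 1 →
      ∃ g₁ ∈ MPlus k, ∃ g₂ ∈ MPlus k, Measurable g₁ ∧ Measurable g₂ ∧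
        jacobiNorm p α β g₁ ≤ K ∧ jacobiNorm p β α g₂ ≤ K ∧
        ∀ q δ, 1 ≤ q → omegaDT k f δ (jacobi α β) q ≤
          omegaDT k g₁ δ (jacobi α β) q + omegaDT k g₂ δ (jacobi β α) q := by
  obtain ⟨K, hK, hPK⟩ := exists_enorm_eval_le_mul_jacobiNorm hk hp α β
  refine ⟨1 + K * LpOn (jacobi α β) p (-1) 1, by finiteness [LpOn_jacobi_ne_top hp hα hβ],
    fun f hf hfk hf1 => ?_⟩
  obtain ⟨P, hP, hP0, hIoi, hIic⟩ :=
    (kMonotoneOn_iff_higherMonotoneOn.1 hfk).exists_higherMonotoneOn_indicator_sub hk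
      (Ioo_mem_nhds (by norm_num) (by norm_num) : Ioo (-1 : ℝ) 1 ∈ nhds 0)
  set g : ℝ → ℝ := fun y => f y - P.eval y
  have hPm : Measurable fun y => P.eval y := P.continuous.measurable
  have hg : Measurable g := hf.sub hPm
  have hg₁ : Measurable ((Ioi 0).indicator g) := hg.indicator measurableSet_Ioi
  have hg₂ : Measurable ((Iic 0).indicator g) := hg.indicator measurableSet_Iic
  have hgK : jacobiNorm p α β g ≤ 1 + K * LpOn (jacobi α β) p (-1) 1 := by
    refine (jacobiNorm_sub_le hf hPm hp).trans (add_le_add hf1.le ?_)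
    refine jacobiNorm_le_mul_LpOn_jacobi hK fun x hx => ?_
    simpa only [hf1, mul_one] using hPK f P hf hP hIoi hIic x hx
  have hsum : (fun x => (Ioi 0).indicator g x + (Iic 0).indicator g x) = g := by
    rw [← compl_Iic]
    exact indicator_compl_add_self (Iic 0) g
  refine ⟨_, indicator_Ioi_mem_MPlus hIoi, _,
    reflect_indicator_Iic_mem_MPlus hIic (sub_eq_zero.2 hP0.symm), hg₁, measurable_reflect k hg₂,
    (jacobiNorm_indicator_le _).trans hgK, ?_, fun q δ hq => ?_⟩
  · rw [jacobiNorm_reflect]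
    exact (jacobiNorm_indicator_le _).trans hgK
  · rw [omegaDT_reflect_jacobi, ← omegaDT_sub_eval hP f]
    have hadd := omegaDT_add_le (k := k) (δ := δ) (measurable_jacobi α β) hg₁ hg₂ hq
    rwa [hsum] at hadd

end Decomposition

section Comparison

variable {k : ℕ} {g : ℝ → ℝ} {p q : ℝ≥0∞} {α β δ : ℝ}

lemma omegaDT_le_jacobiNorm_mul_iSup (hg : Measurable g) (hgM : g ∈ MPlus k)
    (hg0 : jacobiNorm p α β g ≠ 0) (hgt : jacobiNorm p α β g ≠ ⊤) :
    omegaDT k g δ (jacobi α β) q ≤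
      jacobiNorm p α β g * ⨆ f ∈ BSet p α β ∩ MPlus k, omegaDT k f δ (jacobi α β) q := by
  set n := jacobiNorm p α β g with hn
  have hpos : 0 < n.toReal := ENNReal.toReal_pos hg0 hgt
  have henorm : ‖n.toReal⁻¹‖ₑ = n⁻¹ := by
    rw [enorm_inv hpos.ne', Real.enorm_of_nonneg hpos.le, ENNReal.ofReal_toReal hgt]
  have hmem : (fun x => n.toReal⁻¹ * g x) ∈ BSet p α β ∩ MPlus k := by
    refine ⟨⟨hg.const_mul _, ?_⟩, const_mul_mem_MPlus hgM (inv_pos.2 hpos).le⟩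
    exact (jacobiNorm_const_mul p α β _ g).trans
      (by rw [henorm, ← hn, ENNReal.inv_mul_cancel hg0 hgt])
  calc omegaDT k g δ (jacobi α β) q
      = n * (n⁻¹ * omegaDT k g δ (jacobi α β) q) := by
        rw [← mul_assoc, ENNReal.mul_inv_cancel hg0 hgt, one_mul]
    _ = n * omegaDT k (fun x => n.toReal⁻¹ * g x) δ (jacobi α β) q := by
        rw [omegaDT_const_mul, henorm]
    _ ≤ _ := by
        gcongr
        exact le_iSup₂_of_le _ hmem le_rfl

lemma jacobiNorm_indicator_eval_ne_zero {F : Polynomial ℝ} (hF : F ≠ 0) (hp : p ≠ 0) (α β : ℝ) :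
    jacobiNorm p α β ((Ioi 0).indicator fun y => F.eval y) ≠ 0 := by
  have hmeas : Measurable ((Ioi 0).indicator fun y => F.eval y) :=
    F.continuous.measurable.indicator measurableSet_Ioi
  intro hzero
  have hae := (eLpNorm_eq_zero_iff
    ((measurable_jacobi α β).mul hmeas).aestronglyMeasurable hp).1 hzero
  rw [EventuallyEq, ae_restrict_iff' measurableSet_Icc] at hae
  have hroots : ∀ᵐ x : ℝ, ¬ F.IsRoot x :=
    measure_eq_zero_iff_ae_notMem.1 ((Polynomial.finite_setOfPred_isRoot hF).measure_zero _)
  have hIoo : ∀ᵐ x : ℝ, x ∉ Ioo (0 : ℝ) 1 := by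
    filter_upwards [hae, hroots] with x hx hroot hmem
    have hjacobi : jacobi α β x ≠ 0 := (jacobi_pos α β ⟨by linarith [hmem.1], hmem.2⟩).ne'
    have := hx ⟨by linarith [hmem.1], hmem.2.le⟩
    simp only [Pi.mul_apply, indicator_of_mem (mem_Ioi.2 hmem.1), Pi.zero_apply] at this
    exact hroot ((mul_eq_zero.1 this).resolve_left hjacobi)
  have := measure_eq_zero_iff_ae_notMem.2 hIoo
  simp at this

lemma exists_mem_MPlus_jacobiNorm_ne_zero (hk : 1 ≤ k) (hp : 1 ≤ p) (hα : α ∈ Jset p)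
    (hβ : β ∈ Jset p) :
    ∃ e ∈ MPlus k, Measurable e ∧ jacobiNorm p α β e ≠ 0 ∧ jacobiNorm p α β e ≠ ⊤ := by
  obtain ⟨P, hP, -, hIoi, -⟩ :=
    (higherMonotoneOn_pow k (Ioo (-1) 1)).exists_higherMonotoneOn_indicator_sub hk
      (Ioo_mem_nhds (by norm_num) (by norm_num) : Ioo (-1 : ℝ) 1 ∈ nhds 0)
  set F : Polynomial ℝ := .X ^ k - P with hFdef
  have hF : F ≠ 0 := by
    rw [hFdef, sub_ne_zero]
    rintro rfl
    simp at hP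
  have heval : (fun y : ℝ => y ^ k - P.eval y) = fun y => F.eval y := by simp [hFdef]
  rw [heval] at hIoi
  obtain ⟨M, hM⟩ := isCompact_Icc.exists_bound_of_continuousOn (s := Icc (-1 : ℝ) 1)
    F.continuous.continuousOn
  have hfin : jacobiNorm p α β (fun y => F.eval y) ≠ ⊤ :=
    ne_top_of_le_ne_top (ENNReal.mul_ne_top ENNReal.ofReal_ne_top (LpOn_jacobi_ne_top hp hα hβ))
      (jacobiNorm_le_mul_LpOn_jacobi ENNReal.ofReal_ne_top fun x hx =>
        (ofReal_norm (F.eval x)).symm.trans_le (ENNReal.ofReal_le_ofReal (hM x hx)))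
  exact ⟨_, indicator_Ioi_mem_MPlus hIoi, F.continuous.measurable.indicator measurableSet_Ioi,
    jacobiNorm_indicator_eval_ne_zero hF (one_pos.trans_le hp).ne' α β,
    ne_top_of_le_ne_top hfin (jacobiNorm_indicator_le _)⟩

-- A function `g` of norm zero cannot be normalised, but it is the difference of `g + e` and `e`,
-- which have the same positive norm.
lemma exists_omegaDT_le_add_mul_iSup (hk : 1 ≤ k) (hp : 1 ≤ p) (hα : α ∈ Jset p)
    (hβ : β ∈ Jset p) :
    ∃ E ≠ ⊤, ∀ q, 1 ≤ q → ∀ δ, ∀ g ∈ MPlus k, Measurable g → jacobiNorm p α β g ≠ ⊤ →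
      omegaDT k g δ (jacobi α β) q ≤ (jacobiNorm p α β g + E) *
        ⨆ f ∈ BSet p α β ∩ MPlus k, omegaDT k f δ (jacobi α β) q := by
  obtain ⟨e, heM, he, he0, het⟩ := exists_mem_MPlus_jacobiNorm_ne_zero hk hp hα hβ
  refine ⟨2 * jacobiNorm p α β e, by finiteness, fun q hq δ g hgM hg hgt => ?_⟩
  by_cases hg0 : jacobiNorm p α β g = 0
  swap
  · refine (omegaDT_le_jacobiNorm_mul_iSup hg hgM hg0 hgt).trans ?_
    gcongr
    exact le_self_add
  have hnorm := jacobiNorm_add_eq_right hg (one_pos.trans_le hp).ne' hg0 e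
  have hge : Measurable fun x => g x + e x := hg.add he
  have hdiff : (fun x => (g x + e x) + -1 * e x) = g := by ext x; ring
  calc omegaDT k g δ (jacobi α β) q
      ≤ omegaDT k (fun x => g x + e x) δ (jacobi α β) q + omegaDT k e δ (jacobi α β) q := by
        have := omegaDT_add_le (k := k) (δ := δ) (measurable_jacobi α β) hge (he.const_mul (-1)) hq
        rwa [hdiff, omegaDT_const_mul, enorm_neg, enorm_one, one_mul] at this
    _ ≤ jacobiNorm p α β e * (⨆ f ∈ BSet p α β ∩ MPlus k, omegaDT k f δ (jacobi α β) q) +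
          jacobiNorm p α β e * ⨆ f ∈ BSet p α β ∩ MPlus k, omegaDT k f δ (jacobi α β) q := by
        refine add_le_add ?_ (omegaDT_le_jacobiNorm_mul_iSup he heM he0 het)
        rw [← hnorm] at he0 het ⊢
        exact omegaDT_le_jacobiNorm_mul_iSup hge (add_mem_MPlus hgM heM) he0 het
    _ = _ := by rw [hg0, zero_add, two_mul, add_mul]

lemma iSup_MPlus_add_iSup_MPlus_le (k : ℕ) (p q : ℝ≥0∞) (α β δ : ℝ) :
    (⨆ f ∈ BSet p α β ∩ MPlus k, omegaDT k f δ (jacobi α β) q) +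
        (⨆ f ∈ BSet p β α ∩ MPlus k, omegaDT k f δ (jacobi β α) q) ≤
      2 * ⨆ f ∈ BSet p α β ∩ MSet k, omegaDT k f δ (jacobi α β) q := by
  rw [two_mul]
  refine add_le_add (biSup_mono fun f hf => ⟨hf.1, hf.2.1⟩) (iSup₂_le fun f hf => ?_)
  rw [← omegaDT_reflect_jacobi]
  refine le_iSup₂_of_le (reflect k f) ⟨⟨measurable_reflect k hf.1.1, ?_⟩, ?_⟩ le_rfl
  · exact (jacobiNorm_reflect k p β α f).trans hf.1.2
  · exact kMonotoneOn_reflect hf.2.1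

lemma exists_iSup_MSet_le (hk : 1 ≤ k) (hp : 1 ≤ p) (hα : α ∈ Jset p) (hβ : β ∈ Jset p) :
    ∃ T ≠ ⊤, ∀ q, 1 ≤ q → ∀ δ,
      ⨆ f ∈ BSet p α β ∩ MSet k, omegaDT k f δ (jacobi α β) q ≤
        T * ((⨆ f ∈ BSet p α β ∩ MPlus k, omegaDT k f δ (jacobi α β) q) +
          ⨆ f ∈ BSet p β α ∩ MPlus k, omegaDT k f δ (jacobi β α) q) := by
  obtain ⟨K, hK, hdecomp⟩ := exists_decomposition_MPlus hk hp hα hβ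
  obtain ⟨E₁, hE₁, hle₁⟩ := exists_omegaDT_le_add_mul_iSup hk hp hα hβ
  obtain ⟨E₂, hE₂, hle₂⟩ := exists_omegaDT_le_add_mul_iSup hk hp hβ hα
  refine ⟨K + (E₁ + E₂), by finiteness, fun q hq δ => iSup₂_le fun f ⟨⟨hf, hf1⟩, hfk⟩ => ?_⟩
  obtain ⟨g₁, hg₁M, g₂, hg₂M, hg₁, hg₂, hg₁K, hg₂K, hfg⟩ := hdecomp f hf hfk hf1
  refine (hfg q δ hq).trans ?_
  rw [mul_add]
  gcongr
  · refine (hle₁ q hq δ g₁ hg₁M hg₁ (ne_top_of_le_ne_top hK hg₁K)).trans ?_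
    gcongr
    exact le_self_add
  · refine (hle₂ q hq δ g₂ hg₂M hg₂ (ne_top_of_le_ne_top hK hg₂K)).trans ?_
    gcongr
    exact le_add_self

end Comparison

theorem statement10_general (k : ℕ) (hk : 1 ≤ k) (p : ℝ≥0∞) (hp : 1 ≤ p) (α β : ℝ)
    (hα : α ∈ Jset p) (hβ : β ∈ Jset p) :
    ∃ c₁ > (0 : ℝ), ∃ c₂ > (0 : ℝ), ∀ q : ℝ≥0∞, 1 ≤ q → ∀ δ : ℝ,
      ENNReal.ofReal c₁ *
          ((⨆ f ∈ BSet p α β ∩ MPlus k, omegaDT k f δ (jacobi α β) q) +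
            (⨆ f ∈ BSet p β α ∩ MPlus k, omegaDT k f δ (jacobi β α) q)) ≤
        (⨆ f ∈ BSet p α β ∩ MSet k, omegaDT k f δ (jacobi α β) q) ∧
      (⨆ f ∈ BSet p α β ∩ MSet k, omegaDT k f δ (jacobi α β) q) ≤
        ENNReal.ofReal c₂ *
          ((⨆ f ∈ BSet p α β ∩ MPlus k, omegaDT k f δ (jacobi α β) q) +
            (⨆ f ∈ BSet p β α ∩ MPlus k, omegaDT k f δ (jacobi β α) q)) := by
  obtain ⟨T, hT, hle⟩ := exists_iSup_MSet_le hk hp hα hβ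
  refine ⟨2⁻¹, by norm_num, T.toReal + 1, by positivity, fun q hq δ => ⟨?_, ?_⟩⟩
  · rw [ENNReal.ofReal_inv_of_pos two_pos, ENNReal.ofReal_ofNat,
      ENNReal.inv_mul_le_iff two_ne_zero ENNReal.ofNat_ne_top]
    exact iSup_MPlus_add_iSup_MPlus_le k p q α β δ
  · refine (hle q hq δ).trans ?_
    gcongr
    rw [← ENNReal.ofReal_toReal hT, ENNReal.toReal_ofReal ENNReal.toReal_nonneg]
    exact ENNReal.ofReal_le_ofReal (lt_add_one _).le

theorem statement10 (k : ℕ) (hk : 1 ≤ k) (q p : ℝ≥0∞) (hq : 1 ≤ q) (hqp : q < p)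
    (α β : ℝ) (hα : α ∈ Jset p) (hβ : β ∈ Jset p) :
    ∃ c₁ > (0 : ℝ), ∃ c₂ > (0 : ℝ), ∀ δ : ℝ, 0 < δ →
      ENNReal.ofReal c₁ *
          ((⨆ f ∈ BSet p α β ∩ MPlus k, omegaDT k f δ (jacobi α β) q) +
            (⨆ f ∈ BSet p β α ∩ MPlus k, omegaDT k f δ (jacobi β α) q)) ≤
        (⨆ f ∈ BSet p α β ∩ MSet k, omegaDT k f δ (jacobi α β) q) ∧
      (⨆ f ∈ BSet p α β ∩ MSet k, omegaDT k f δ (jacobi α β) q) ≤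
        ENNReal.ofReal c₂ *
          ((⨆ f ∈ BSet p α β ∩ MPlus k, omegaDT k f δ (jacobi α β) q) +
            (⨆ f ∈ BSet p β α ∩ MPlus k, omegaDT k f δ (jacobi β α) q)) := by
  obtain ⟨c₁, hc₁, c₂, hc₂, hle⟩ := statement10_general k hk p (hq.trans hqp.le) α β hα hβ
  exact ⟨c₁, hc₁, c₂, hc₂, fun δ _ => hle q hq δ⟩
end
end

section
/- Let 0 < δ < 1/100, β ∈ ℝ, 1 < q < ∞, and let f ∈ M² ∩ W_q^{β,β} be such that the restrictions of f to [−1, −1+100δ²] and to [1−100δ², 1] are linear (affine) polynomials. Then there is a constant c > 0, depending only on q and β, such that Ω_φ²(f, δ)_{φ^{2β}, q} ≤ c·δ^{1/q − 1}·Ω_φ²(f, δ)_{φ^{2β−1+1/q}, 1}, where φ^γ denotes the weight x ↦ (1−x²)^{γ/2}. -/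
open MeasureTheory Set Filter
open scoped ENNReal

noncomputable section

/-- The weight `φ^γ : x ↦ (1-x²)^{γ/2}`. -/
def phipow (γ : ℝ) (x : ℝ) : ℝ := (1 - x ^ 2) ^ (γ / 2)

/-!
Since `f` is convex, its second differences are nonnegative and nondecreasing in the step; since `f`
is affine near `±1`, they vanish near the endpoints. Hence the supremum defining `Ω_φ²(f, δ)` is
attained at `h = δ`.

Convexity also bounds a second difference by an average of such differences: with `s ≤ t`, the one
of step `t` at `x` is at most `t / s²` times the integral over `[x - t, x + t]` of those of step
`s`. Take `t = δ φ(x)`. As long as `3t ≤ 1 - |x|`, which `18 δ² ≤ 1 - |x|` guarantees, `φ` varies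
by a factor of at most `2` on this window; so `s = t / 2` is below `δ φ(y)` for every `y` in it,
and `δ φ^{γ+1} |Δ²_{δφ} f| ≤ C ‖φ^γ Δ²_{δφ} f‖₁` pointwise.

With `γ = 2β - 1 + 1/q` we have `φ^{2β} = (φ^{γ+1})^{1-1/q} (φ^γ)^{1/q}`, so interpolating `L^q`
between `L^∞` and `L^1` gives the factor `δ^{1/q-1}`.
-/

/-- The second symmetric difference of `f` with step `t`, not truncated to `[-1, 1]`. -/
def secondDiff (f : ℝ → ℝ) (t x : ℝ) : ℝ := f (x - t) - 2 * f x + f (x + t)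

/-- `f` coincides with an affine function on each of the two intervals of length `ε` at the ends
of `[-1, 1]`; the two affine functions may differ. -/
def AffineNearEndpoints (ε : ℝ) (f : ℝ → ℝ) : Prop :=
  (∃ a b : ℝ, ∀ x ∈ Icc (-1 : ℝ) (-1 + ε), f x = a * x + b) ∧
    ∃ a b : ℝ, ∀ x ∈ Icc (1 - ε) (1 : ℝ), f x = a * x + b

lemma AffineNearEndpoints.mono {ε ε' : ℝ} {f : ℝ → ℝ} (hε : ε ≤ ε')
    (hf : AffineNearEndpoints ε' f) : AffineNearEndpoints ε f := by
  obtain ⟨⟨a, b, hleft⟩, a', b', hright⟩ := hf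
  exact ⟨⟨a, b, fun x hx => hleft x ⟨hx.1, by linarith [hx.2]⟩⟩,
    a', b', fun x hx => hright x ⟨by linarith [hx.1], hx.2⟩⟩

/-- The weighted `L^p` norm of the second difference with step `h φ` over `[-1 + 8h², 1 - 8h²]`,
whose supremum over `0 < h ≤ δ` is the modulus `Ω_φ²(f, δ)_{w,p}`. -/
def mainPartNorm (f : ℝ → ℝ) (h : ℝ) (wt : ℝ → ℝ) (p : ℝ≥0∞) : ℝ≥0∞ :=
  LpOn (fun x => wt x * symmDelta 2 (h * phiW x) f x) p (-1 + 8 * h ^ 2) (1 - 8 * h ^ 2)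

section Convex

variable {f : ℝ → ℝ} {I : Set ℝ} {a b c d s t x : ℝ}

lemma slope_le_slope_of_convexOn (hf : ConvexOn ℝ I f) (ha : a ∈ I) (hd : d ∈ I)
    (hab : a < b) (hcd : c < d) (hac : a ≤ c) (hbd : b ≤ d) : slope f a b ≤ slope f c d := by
  have hI : Icc a d ⊆ I := hf.1.ordConnected.out ha hd
  have had : a < d := hab.trans_le hbd
  calc slope f a b ≤ slope f a d :=
        hf.slope_mono ha ⟨hI ⟨hab.le, hbd⟩, hab.ne'⟩ ⟨hd, had.ne'⟩ hbd
    _ = slope f d a := slope_comm f a d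
    _ ≤ slope f d c := hf.slope_mono hd ⟨ha, had.ne⟩ ⟨hI ⟨hac, hcd.le⟩, hcd.ne⟩ hac
    _ = slope f c d := slope_comm f d c

lemma secondDiff_nonneg_of_convexOn (hf : ConvexOn ℝ I f) (hl : x - t ∈ I) (hr : x + t ∈ I)
    (ht : 0 < t) : 0 ≤ secondDiff f t x := by
  have hslope : slope f (x - t) x ≤ slope f x (x + t) :=
    slope_le_slope_of_convexOn hf hl hr (by linarith) (by linarith) (by linarith) (by linarith)
  rw [slope_def_field, slope_def_field, sub_sub_cancel, add_sub_cancel_left,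
    div_le_div_iff_of_pos_right ht] at hslope
  unfold secondDiff
  linarith

lemma secondDiff_le_div_mul_secondDiff_of_convexOn (hf : ConvexOn ℝ I f) (hl : x - t ∈ I)
    (hr : x + t ∈ I) (hs : 0 ≤ s) (ht : 0 < t) (hst : s ≤ t) :
    secondDiff f s x ≤ s / t * secondDiff f t x := by
  rcases hs.eq_or_lt with rfl | hs
  · simp only [secondDiff, sub_zero, add_zero, zero_div, zero_mul]
    linarith
  have hx : x ∈ I := hf.1.ordConnected.out hl hr ⟨by linarith, by linarith⟩
  have hright : slope f x (x + s) ≤ slope f x (x + t) :=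
    slope_le_slope_of_convexOn hf hx hr (by linarith) (by linarith) le_rfl (by linarith)
  have hleft : slope f (x - t) x ≤ slope f (x - s) x :=
    slope_le_slope_of_convexOn hf hl hx (by linarith) (by linarith) (by linarith) le_rfl
  simp only [slope_def_field, sub_sub_cancel, add_sub_cancel_left] at hright hleft
  rw [div_le_iff₀ hs] at hright
  rw [le_div_iff₀ hs] at hleft
  calc secondDiff f s x = f (x + s) - f x - (f x - f (x - s)) := by unfold secondDiff; ring
    _ ≤ (f (x + t) - f x) / t * s - (f x - f (x - t)) / t * s := sub_le_sub hright hleft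
    _ = s / t * secondDiff f t x := by unfold secondDiff; ring

lemma secondDiff_le_secondDiff_of_convexOn (hf : ConvexOn ℝ I f) (hl : x - t ∈ I)
    (hr : x + t ∈ I) (hs : 0 ≤ s) (ht : 0 < t) (hst : s ≤ t) :
    secondDiff f s x ≤ secondDiff f t x :=
  (secondDiff_le_div_mul_secondDiff_of_convexOn hf hl hr hs ht hst).trans <|
    mul_le_of_le_one_left (secondDiff_nonneg_of_convexOn hf hl hr ht) ((div_le_one ht).2 hst)

lemma monotoneOn_sub_comp_sub_of_convexOn (hf : ConvexOn ℝ (Icc a b) f) (hs : 0 < s) :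
    MonotoneOn (fun y => f y - f (y - s)) (Icc (a + s) b) := by
  intro y hy z hz hyz
  have hslope : slope f (y - s) y ≤ slope f (z - s) z :=
    slope_le_slope_of_convexOn hf ⟨by linarith [hy.1], by linarith [hy.2]⟩
      ⟨by linarith [hz.1], hz.2⟩ (by linarith) (by linarith) (by linarith) hyz
  rwa [slope_def_field, slope_def_field, sub_sub_cancel, sub_sub_cancel,
    div_le_div_iff_of_pos_right hs] at hslope

lemma integral_comp_add_right_sub {E : Type*} [NormedAddCommGroup E] [NormedSpace ℝ E]
    {g : ℝ → E} (hab : IntervalIntegrable g volume a b)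
    (ha : IntervalIntegrable g volume a (a + s)) (hb : IntervalIntegrable g volume b (b + s)) :
    ∫ y in a..b, (g (y + s) - g y) = (∫ y in b..b + s, g y) - ∫ y in a..a + s, g y := by
  have hshift : IntervalIntegrable g volume (a + s) (b + s) := (ha.symm.trans hab).trans hb
  have hcomp : IntervalIntegrable (fun y => g (y + s)) volume a b := by
    simpa only [add_sub_cancel_right] using hshift.comp_add_right s
  rw [intervalIntegral.integral_sub hcomp hab, intervalIntegral.integral_comp_add_right g s,
    intervalIntegral.integral_interval_sub_interval_comm' hshift hab ha.symm]

lemma mul_le_integral_of_monotoneOn {g : ℝ → ℝ} (hab : a ≤ b) (hg : MonotoneOn g (Icc a b)) :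
    (b - a) * g a ≤ ∫ y in a..b, g y := by
  have hint : IntervalIntegrable g volume a b :=
    MonotoneOn.intervalIntegrable (by rwa [uIcc_of_le hab])
  simpa using intervalIntegral.integral_mono_on hab intervalIntegrable_const hint
    fun y hy => hg (left_mem_Icc.2 hab) hy hy.1

lemma integral_le_mul_of_monotoneOn {g : ℝ → ℝ} (hab : a ≤ b) (hg : MonotoneOn g (Icc a b)) :
    ∫ y in a..b, g y ≤ (b - a) * g b := by
  have hint : IntervalIntegrable g volume a b :=
    MonotoneOn.intervalIntegrable (by rwa [uIcc_of_le hab])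
  simpa using intervalIntegral.integral_mono_on hab hint intervalIntegrable_const
    fun y hy => hg hy (right_mem_Icc.2 hab) hy.2

-- The integrand is the increment over a step `s` of the nondecreasing `y ↦ f y - f (y - s)`, so
-- its integral telescopes to two boundary terms.
lemma mul_secondDiff_sub_le_integral_secondDiff
    (hf : ConvexOn ℝ (Icc (x - t - s) (x + t + s)) f) (hs : 0 < s) (hst : s ≤ t) :
    s * (secondDiff f t x - secondDiff f (t - s) x) ≤
      ∫ y in x - t..x + t, secondDiff f s y := by
  set g : ℝ → ℝ := fun y => f y - f (y - s) with hg
  have hmono : MonotoneOn g (Icc (x - t) (x + t + s)) := by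
    simpa only [sub_add_cancel] using monotoneOn_sub_comp_sub_of_convexOn hf hs
  have hint {a b : ℝ} (ha : x - t ≤ a) (hab : a ≤ b) (hb : b ≤ x + t + s) :
      IntervalIntegrable g volume a b :=
    MonotoneOn.intervalIntegrable (by rw [uIcc_of_le hab]; exact hmono.mono (Icc_subset_Icc ha hb))
  have htelescope : ∫ y in x - t..x + t, secondDiff f s y =
      (∫ y in x + t..x + t + s, g y) - ∫ y in x - t..x - t + s, g y := by
    rw [← integral_comp_add_right_sub (hint le_rfl (by linarith) (by linarith))
      (hint le_rfl (by linarith) (by linarith)) (hint (by linarith) (by linarith) le_rfl)]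
    refine intervalIntegral.integral_congr fun y _ => ?_
    simp only [hg, secondDiff, add_sub_cancel_right]
    ring
  have hright := mul_le_integral_of_monotoneOn (by linarith)
    (hmono.mono (Icc_subset_Icc_left (by linarith : x - t ≤ x + t)))
  have hleft := integral_le_mul_of_monotoneOn (by linarith)
    (hmono.mono (Icc_subset_Icc_right (by linarith : x - t + s ≤ x + t + s)))
  calc s * (secondDiff f t x - secondDiff f (t - s) x)
      = (x + t + s - (x + t)) * g (x + t) - (x - t + s - (x - t)) * g (x - t + s) := by
        simp only [hg, secondDiff, add_sub_cancel_right, sub_sub_eq_add_sub, add_sub_assoc']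
        ring_nf
    _ ≤ ∫ y in x - t..x + t, secondDiff f s y := htelescope ▸ sub_le_sub hright hleft

lemma sq_div_mul_secondDiff_le_integral_secondDiff
    (hf : ConvexOn ℝ (Icc (x - t - s) (x + t + s)) f) (hs : 0 < s) (hst : s ≤ t) :
    s ^ 2 / t * secondDiff f t x ≤ ∫ y in x - t..x + t, secondDiff f s y := by
  have ht : 0 < t := hs.trans_le hst
  have hshrink : secondDiff f (t - s) x ≤ (t - s) / t * secondDiff f t x :=
    secondDiff_le_div_mul_secondDiff_of_convexOn hf ⟨by linarith, by linarith⟩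
      ⟨by linarith, by linarith⟩ (by linarith) ht (by linarith)
  calc s ^ 2 / t * secondDiff f t x
      = s * (secondDiff f t x - (t - s) / t * secondDiff f t x) := by field_simp; ring
    _ ≤ s * (secondDiff f t x - secondDiff f (t - s) x) := by gcongr
    _ ≤ ∫ y in x - t..x + t, secondDiff f s y :=
      mul_secondDiff_sub_le_integral_secondDiff hf hs hst

end Convex

lemma convexOn_of_mem_MSet_two {f : ℝ → ℝ} (hf : f ∈ MSet 2) :
    ConvexOn ℝ (Ioo (-1 : ℝ) 1) f := by
  refine convexOn_of_slope_mono_adjacent (convex_Ioo _ _) fun {x y z} hx hz hxy hyz => ?_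
  have hy : y ∈ Ioo (-1 : ℝ) 1 := ⟨hx.1.trans hxy, hyz.trans hz.2⟩
  have hinj : Function.Injective ![x, y, z] := by
    intro i j hij
    fin_cases i <;> fin_cases j <;> simp at hij ⊢ <;> linarith
  have hmem : ∀ i, ![x, y, z] i ∈ Ioo (-1 : ℝ) 1 := by
    intro i
    fin_cases i <;> assumption
  have hdd : 0 ≤ f x / ((x - y) * (x - z)) + f y / ((y - x) * (y - z)) +
      f z / ((z - x) * (z - y)) := by
    have h := hf ![x, y, z] hinj hmem
    rw [Fin.sum_univ_three, show Finset.univ.erase (0 : Fin 3) = {1, 2} by decide,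
      show Finset.univ.erase (1 : Fin 3) = {0, 2} by decide,
      show Finset.univ.erase (2 : Fin 3) = {0, 1} by decide] at h
    simpa using h
  have hslopes : (f z - f y) / (z - y) - (f y - f x) / (y - x) =
      (z - x) * (f x / ((x - y) * (x - z)) + f y / ((y - x) * (y - z)) +
        f z / ((z - x) * (z - y))) := by
    have hxy' : x - y ≠ 0 := by linarith
    have hxz' : x - z ≠ 0 := by linarith
    have hyz' : y - z ≠ 0 := by linarith
    rw [← neg_sub y z, ← neg_sub x y, ← neg_sub x z]
    field_simp
    ring
  exact sub_nonneg.1 (hslopes ▸ mul_nonneg (by linarith) hdd)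

section Phi

variable {c x y : ℝ}

lemma one_sub_abs_le_one_sub_sq (hx : |x| ≤ 1) : 1 - |x| ≤ 1 - x ^ 2 := by
  nlinarith [sq_abs x, abs_nonneg x]

lemma one_sub_sq_le_two_mul_one_sub_abs (x : ℝ) : 1 - x ^ 2 ≤ 2 * (1 - |x|) := by
  nlinarith [sq_abs x, sq_nonneg (1 - |x|)]

lemma phiW_pos (hx : |x| < 1) : 0 < phiW x :=
  Real.sqrt_pos.2 (by linarith [one_sub_abs_le_one_sub_sq hx.le])

lemma mul_phiW_le_one_sub_abs (hc : 2 * c ^ 2 ≤ 1 - |x|) : c * phiW x ≤ 1 - |x| := by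
  have hx : 0 ≤ 1 - |x| := (by positivity : 0 ≤ 2 * c ^ 2).trans hc
  have hφ : phiW x ^ 2 = 1 - x ^ 2 :=
    Real.sq_sqrt (hx.trans (one_sub_abs_le_one_sub_sq (by linarith)))
  refine le_of_sq_le_sq ?_ hx
  calc (c * phiW x) ^ 2 = c ^ 2 * (1 - x ^ 2) := by rw [mul_pow, hφ]
    _ ≤ c ^ 2 * (2 * (1 - |x|)) := by gcongr; exact one_sub_sq_le_two_mul_one_sub_abs x
    _ = 2 * c ^ 2 * (1 - |x|) := by ring
    _ ≤ (1 - |x|) ^ 2 := by rw [sq (1 - |x|)]; gcongr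

lemma one_sub_sq_le_four_mul_one_sub_sq (hx : |x| ≤ 1) (hxy : 1 - |y| ≤ 2 * (1 - |x|)) :
    1 - y ^ 2 ≤ 4 * (1 - x ^ 2) := by
  linarith [one_sub_sq_le_two_mul_one_sub_abs y, one_sub_abs_le_one_sub_sq hx]

lemma rpow_le_rpow_abs_mul_rpow {a b K e : ℝ} (ha : 0 < a) (hb : 0 < b) (hK : 0 < K)
    (hab : a ≤ K * b) (hba : b ≤ K * a) : a ^ e ≤ K ^ |e| * b ^ e := by
  rcases le_total 0 e with he | he
  · rw [abs_of_nonneg he, ← Real.mul_rpow hK.le hb.le]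
    exact Real.rpow_le_rpow ha.le hab he
  · calc a ^ e ≤ (K⁻¹ * b) ^ e :=
          Real.rpow_le_rpow_of_nonpos (by positivity) ((inv_mul_le_iff₀ hK).2 hba) he
      _ = K ^ |e| * b ^ e := by
          rw [Real.mul_rpow (by positivity) hb.le, Real.inv_rpow hK.le, ← Real.rpow_neg hK.le,
            abs_of_nonpos he]

lemma phipow_pos (hx : |x| < 1) (γ : ℝ) : 0 < phipow γ x :=
  Real.rpow_pos_of_pos (by linarith [one_sub_abs_le_one_sub_sq hx.le]) _

lemma phipow_rpow (hx : |x| < 1) (γ θ : ℝ) : phipow γ x ^ θ = phipow (γ * θ) x := by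
  have hpos : 0 < 1 - x ^ 2 := by linarith [one_sub_abs_le_one_sub_sq hx.le]
  rw [phipow, phipow, ← Real.rpow_mul hpos.le, div_mul_eq_mul_div]

lemma phipow_add (hx : |x| < 1) (γ θ : ℝ) :
    phipow (γ + θ) x = phipow γ x * phipow θ x := by
  have hpos : 0 < 1 - x ^ 2 := by linarith [one_sub_abs_le_one_sub_sq hx.le]
  rw [phipow, phipow, phipow, ← Real.rpow_add hpos, add_div]

lemma phipow_one (x : ℝ) : phipow 1 x = phiW x := (Real.sqrt_eq_rpow _).symm

lemma phipow_le_two_rpow_abs_mul_phipow (hx : |x| < 1) (hy : |y| < 1)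
    (hxy : 1 - |x| ≤ 2 * (1 - |y|)) (hyx : 1 - |y| ≤ 2 * (1 - |x|)) (γ : ℝ) :
    phipow γ x ≤ 2 ^ |γ| * phipow γ y := by
  have hx' : 0 < 1 - x ^ 2 := by linarith [one_sub_abs_le_one_sub_sq hx.le]
  have hy' : 0 < 1 - y ^ 2 := by linarith [one_sub_abs_le_one_sub_sq hy.le]
  have hconst : (4 : ℝ) ^ |γ / 2| = 2 ^ |γ| := by
    rw [show (4 : ℝ) = 2 ^ (2 : ℝ) by norm_num, ← Real.rpow_mul zero_le_two, abs_div,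
      abs_two, mul_div_cancel₀ _ two_ne_zero]
  rw [← hconst]
  exact rpow_le_rpow_abs_mul_rpow hx' hy' (by norm_num)
    (one_sub_sq_le_four_mul_one_sub_sq hy.le hxy) (one_sub_sq_le_four_mul_one_sub_sq hx.le hyx)

lemma phiW_le_two_mul_phiW (hx : |x| < 1) (hy : |y| < 1)
    (hxy : 1 - |x| ≤ 2 * (1 - |y|)) (hyx : 1 - |y| ≤ 2 * (1 - |x|)) :
    phiW x ≤ 2 * phiW y := by
  simpa [phipow_one] using phipow_le_two_rpow_abs_mul_phipow hx hy hxy hyx 1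

lemma enorm_phipow_convexComb_mul (hx : |x| < 1) {θ : ℝ} (hθ₀ : 0 ≤ θ) (hθ₁ : θ ≤ 1)
    (a b d : ℝ) :
    ‖phipow (a * (1 - θ) + b * θ) x * d‖ₑ =
      ‖phipow a x * d‖ₑ ^ (1 - θ) * ‖phipow b x * d‖ₑ ^ θ := by
  have hθ : 0 ≤ 1 - θ := sub_nonneg.2 hθ₁
  have hpow (γ : ℝ) {r : ℝ} : ‖phipow γ x‖ₑ ^ r = ‖phipow (γ * r) x‖ₑ := by
    rw [← phipow_rpow hx, Real.enorm_of_nonneg (phipow_pos hx γ).le,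
      Real.enorm_of_nonneg (by have := phipow_pos hx γ; positivity),
      ENNReal.ofReal_rpow_of_pos (phipow_pos hx γ)]
  have hd : ‖d‖ₑ ^ (1 - θ) * ‖d‖ₑ ^ θ = ‖d‖ₑ := by
    rw [← ENNReal.rpow_add_of_nonneg _ _ hθ hθ₀, sub_add_cancel, ENNReal.rpow_one]
  calc ‖phipow (a * (1 - θ) + b * θ) x * d‖ₑ
      = ‖phipow a x‖ₑ ^ (1 - θ) * ‖phipow b x‖ₑ ^ θ * (‖d‖ₑ ^ (1 - θ) * ‖d‖ₑ ^ θ) := by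
        rw [phipow_add hx, hpow, hpow, hd, enorm_mul, enorm_mul]
    _ = ‖phipow a x * d‖ₑ ^ (1 - θ) * ‖phipow b x * d‖ₑ ^ θ := by
        rw [enorm_mul, enorm_mul, ENNReal.mul_rpow_of_nonneg _ _ hθ,
          ENNReal.mul_rpow_of_nonneg _ _ hθ₀]
        ring

end Phi

section SymmDelta

variable {f : ℝ → ℝ} {h s t x y γ δ ε : ℝ}

lemma symmDelta_two_eq_secondDiff (f : ℝ → ℝ) (ht : 0 ≤ t) (htx : t ≤ 1 - |x|) :
    symmDelta 2 t f x = secondDiff f t x := by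
  have hl := neg_abs_le x
  have hr := le_abs_self x
  have hmem : x - (2 : ℕ) * t / 2 ∈ Icc (-1 : ℝ) 1 ∧ x + (2 : ℕ) * t / 2 ∈ Icc (-1 : ℝ) 1 := by
    push_cast
    exact ⟨⟨by linarith, by linarith⟩, by linarith, by linarith⟩
  have hpoints : x - (2 : ℕ) * t / 2 + (0 : ℕ) * t = x - t ∧
      x - (2 : ℕ) * t / 2 + (1 : ℕ) * t = x ∧ x - (2 : ℕ) * t / 2 + (2 : ℕ) * t = x + t := by
    push_cast
    exact ⟨by ring, by ring, by ring⟩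
  rw [symmDelta, if_pos hmem, Finset.sum_range_succ, Finset.sum_range_succ, Finset.sum_range_one,
    hpoints.1, hpoints.2.1, hpoints.2.2, secondDiff]
  norm_num
  ring

lemma symmDelta_two_eq_zero (hf : AffineNearEndpoints ε f) (ht : 0 ≤ t) (htx : t ≤ 1 - |x|)
    (hx : 2 * (1 - |x|) ≤ ε) : symmDelta 2 t f x = 0 := by
  obtain ⟨⟨a, b, hleft⟩, a', b', hright⟩ := hf
  rw [symmDelta_two_eq_secondDiff f ht htx, secondDiff]
  rcases abs_cases x with ⟨habs, -⟩ | ⟨habs, -⟩ <;> rw [habs] at htx hx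
  · rw [hright (x - t) ⟨by linarith, by linarith⟩, hright x ⟨by linarith, by linarith⟩,
      hright (x + t) ⟨by linarith, by linarith⟩]
    ring
  · rw [hleft (x - t) ⟨by linarith, by linarith⟩, hleft x ⟨by linarith, by linarith⟩,
      hleft (x + t) ⟨by linarith, by linarith⟩]
    ring

lemma Icc_sub_add_subset_Ioo (htx : t < 1 - |x|) : Icc (x - t) (x + t) ⊆ Ioo (-1) 1 :=
  fun _ hy => ⟨by linarith [hy.1, neg_abs_le x], by linarith [hy.2, le_abs_self x]⟩

lemma symmDelta_two_nonneg (hf : ConvexOn ℝ (Ioo (-1) 1) f) (ht : 0 < t) (htx : t < 1 - |x|) :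
    0 ≤ symmDelta 2 t f x := by
  rw [symmDelta_two_eq_secondDiff f ht.le htx.le]
  exact secondDiff_nonneg_of_convexOn hf
    (Icc_sub_add_subset_Ioo htx (left_mem_Icc.2 (by linarith)))
    (Icc_sub_add_subset_Ioo htx (right_mem_Icc.2 (by linarith))) ht

lemma secondDiff_le_symmDelta_two (hf : ConvexOn ℝ (Ioo (-1) 1) f) (hs : 0 ≤ s) (ht : 0 < t)
    (hst : s ≤ t) (htx : t < 1 - |x|) : secondDiff f s x ≤ symmDelta 2 t f x := by
  rw [symmDelta_two_eq_secondDiff f ht.le htx.le]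
  exact secondDiff_le_secondDiff_of_convexOn hf
    (Icc_sub_add_subset_Ioo htx (left_mem_Icc.2 (by linarith)))
    (Icc_sub_add_subset_Ioo htx (right_mem_Icc.2 (by linarith))) hs ht hst

lemma enorm_symmDelta_two_le (hf : ConvexOn ℝ (Ioo (-1) 1) f) (hs : 0 < s) (hst : s ≤ t)
    (htx : t < 1 - |x|) : ‖symmDelta 2 s f x‖ₑ ≤ ‖symmDelta 2 t f x‖ₑ := by
  have ht : 0 < t := hs.trans_le hst
  rw [Real.enorm_of_nonneg (symmDelta_two_nonneg hf hs (hst.trans_lt htx)),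
    Real.enorm_of_nonneg (symmDelta_two_nonneg hf ht htx),
    symmDelta_two_eq_secondDiff f hs.le (hst.trans htx.le)]
  exact ENNReal.ofReal_le_ofReal (secondDiff_le_symmDelta_two hf hs.le ht hst htx)

lemma enorm_phipow_mul_secondDiff_le (hf : ConvexOn ℝ (Ioo (-1) 1) f) (hδ : 0 < δ)
    (hx : 18 * δ ^ 2 ≤ 1 - |x|) (hxy : |y - x| ≤ δ * phiW x) :
    ‖phipow γ x * secondDiff f (δ * phiW x / 2) y‖ₑ ≤
      ENNReal.ofReal (2 ^ |γ|) * ‖phipow γ y * symmDelta 2 (δ * phiW y) f y‖ₑ := by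
  have hδ2 : 0 < δ ^ 2 := by positivity
  have hx₁ : |x| < 1 := by linarith
  have hstep : 3 * δ * phiW x ≤ 1 - |x| := mul_phiW_le_one_sub_abs (by linarith)
  have hdist : |(|y| - |x|)| ≤ δ * phiW x := (abs_abs_sub_abs_le y x).trans hxy
  obtain ⟨hlower, hupper⟩ := abs_le.1 hdist
  have hy₁ : |y| < 1 := by linarith
  have hφx : 0 < phiW x := phiW_pos hx₁
  have hφy : 0 < phiW y := phiW_pos hy₁
  have hφ : phiW x ≤ 2 * phiW y := phiW_le_two_mul_phiW hx₁ hy₁ (by linarith) (by linarith)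
  have hhalf : δ * phiW x / 2 ≤ δ * phiW y := by nlinarith
  have hroom : δ * phiW y < 1 - |y| := by
    have : 2 * δ * phiW y ≤ 1 - |y| := mul_phiW_le_one_sub_abs (by linarith)
    linarith [mul_pos hδ hφy]
  have hnonneg : 0 ≤ secondDiff f (δ * phiW x / 2) y := by
    rw [← symmDelta_two_eq_secondDiff f (by positivity) (by linarith)]
    exact symmDelta_two_nonneg hf (by positivity) (by linarith)
  have hle : secondDiff f (δ * phiW x / 2) y ≤ symmDelta 2 (δ * phiW y) f y :=
    secondDiff_le_symmDelta_two hf (by positivity) (by positivity) hhalf hroom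
  have hwx : 0 < phipow γ x := phipow_pos hx₁ γ
  have hwy : 0 < phipow γ y := phipow_pos hy₁ γ
  have hw : phipow γ x ≤ 2 ^ |γ| * phipow γ y :=
    phipow_le_two_rpow_abs_mul_phipow hx₁ hy₁ (by linarith) (by linarith) γ
  rw [Real.enorm_of_nonneg (by positivity),
    Real.enorm_of_nonneg (mul_nonneg hwy.le (hnonneg.trans hle)),
    ← ENNReal.ofReal_mul (by positivity), ← mul_assoc]
  gcongr

lemma phipow_add_one_mul_symmDelta_le_integral (hf : ConvexOn ℝ (Ioo (-1) 1) f) (hδ : 0 < δ)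
    (hx : 18 * δ ^ 2 ≤ 1 - |x|) :
    phipow (γ + 1) x * symmDelta 2 (δ * phiW x) f x ≤
      4 / δ * ∫ y in x - δ * phiW x..x + δ * phiW x,
        phipow γ x * secondDiff f (δ * phiW x / 2) y := by
  have hx₁ : |x| < 1 := by linarith [pow_pos hδ 2]
  have hφ : 0 < phiW x := phiW_pos hx₁
  have hroom : 3 * δ * phiW x ≤ 1 - |x| := mul_phiW_le_one_sub_abs (by linarith)
  have hw : 0 < phipow γ x := phipow_pos hx₁ γ
  have ht : 0 < δ * phiW x := mul_pos hδ hφ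
  have hwindow : Icc (x - δ * phiW x - δ * phiW x / 2) (x + δ * phiW x + δ * phiW x / 2) ⊆
      Ioo (-1) 1 := by
    simpa only [sub_sub, add_assoc] using
      Icc_sub_add_subset_Ioo (by linarith : δ * phiW x + δ * phiW x / 2 < 1 - |x|)
  rw [symmDelta_two_eq_secondDiff f ht.le (by linarith), intervalIntegral.integral_const_mul,
    phipow_add hx₁, phipow_one]
  calc phipow γ x * phiW x * secondDiff f (δ * phiW x) x
      = 4 / δ * (phipow γ x *
          ((δ * phiW x / 2) ^ 2 / (δ * phiW x) * secondDiff f (δ * phiW x) x)) := by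
        field_simp; ring
    _ ≤ _ := by
        gcongr
        exact sq_div_mul_secondDiff_le_integral_secondDiff
          (hf.subset hwindow (convex_Icc _ _)) (by linarith) (by linarith)

lemma enorm_phipow_add_one_mul_symmDelta_le (hf : ConvexOn ℝ (Ioo (-1) 1) f) (hδ : 0 < δ)
    (hx : 18 * δ ^ 2 ≤ 1 - |x|) :
    ‖phipow (γ + 1) x * symmDelta 2 (δ * phiW x) f x‖ₑ ≤
      ENNReal.ofReal (4 * 2 ^ |γ| / δ) * mainPartNorm f δ (phipow γ) 1 := by
  have hδ2 : 0 < δ ^ 2 := pow_pos hδ 2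
  have hx₁ : |x| < 1 := by linarith
  have ht : 0 < δ * phiW x := mul_pos hδ (phiW_pos hx₁)
  have hroom : 3 * δ * phiW x ≤ 1 - |x| := mul_phiW_le_one_sub_abs (by linarith)
  have hwindow : Ioc (x - δ * phiW x) (x + δ * phiW x) ⊆
      Icc (-1 + 8 * δ ^ 2) (1 - 8 * δ ^ 2) := fun y hy =>
    ⟨by linarith [hy.1, neg_abs_le x], by linarith [hy.2, le_abs_self x]⟩
  have hnonneg : 0 ≤ phipow (γ + 1) x * symmDelta 2 (δ * phiW x) f x :=
    mul_nonneg (phipow_pos hx₁ _).le (symmDelta_two_nonneg hf ht (by linarith))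
  calc ‖phipow (γ + 1) x * symmDelta 2 (δ * phiW x) f x‖ₑ
      ≤ ENNReal.ofReal (4 / δ * ∫ y in x - δ * phiW x..x + δ * phiW x,
          phipow γ x * secondDiff f (δ * phiW x / 2) y) := by
        rw [Real.enorm_of_nonneg hnonneg]
        exact ENNReal.ofReal_le_ofReal (phipow_add_one_mul_symmDelta_le_integral hf hδ hx)
    _ ≤ ENNReal.ofReal (4 / δ) * ∫⁻ y in Ioc (x - δ * phiW x) (x + δ * phiW x),
          ‖phipow γ x * secondDiff f (δ * phiW x / 2) y‖ₑ := by
        rw [ENNReal.ofReal_mul (by positivity), intervalIntegral.integral_of_le (by linarith)]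
        gcongr
        exact (Real.ofReal_le_enorm _).trans (enorm_integral_le_lintegral_enorm _)
    _ ≤ ENNReal.ofReal (4 / δ) * ∫⁻ y in Ioc (x - δ * phiW x) (x + δ * phiW x),
          ENNReal.ofReal (2 ^ |γ|) * ‖phipow γ y * symmDelta 2 (δ * phiW y) f y‖ₑ := by
        gcongr 1
        refine setLIntegral_mono' measurableSet_Ioc fun y hy => ?_
        exact enorm_phipow_mul_secondDiff_le hf hδ hx
          (abs_le.2 ⟨by linarith [hy.1], by linarith [hy.2]⟩)
    _ = ENNReal.ofReal (4 * 2 ^ |γ| / δ) * ∫⁻ y in Ioc (x - δ * phiW x) (x + δ * phiW x),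
          ‖phipow γ y * symmDelta 2 (δ * phiW y) f y‖ₑ := by
        rw [lintegral_const_mul' _ _ ENNReal.ofReal_ne_top, ← mul_assoc,
          ← ENNReal.ofReal_mul (by positivity), div_mul_eq_mul_div]
    _ ≤ ENNReal.ofReal (4 * 2 ^ |γ| / δ) * mainPartNorm f δ (phipow γ) 1 := by
        rw [mainPartNorm, LpOn, eLpNorm_one_eq_lintegral_enorm]
        gcongr

lemma mainPartNorm_mono (hf : ConvexOn ℝ (Ioo (-1) 1) f)
    (hends : AffineNearEndpoints (36 * δ ^ 2) f) (hh : 0 < h) (hhδ : h ≤ δ) (wt : ℝ → ℝ)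
    (p : ℝ≥0∞) : mainPartNorm f h wt p ≤ mainPartNorm f δ wt p := by
  set S : Set ℝ := Icc (-1 + 8 * δ ^ 2) (1 - 8 * δ ^ 2)
  set T : Set ℝ := Icc (-1 + 8 * h ^ 2) (1 - 8 * h ^ 2)
  have hh2 : 0 < h ^ 2 := pow_pos hh 2
  have hδ2 : 0 < δ ^ 2 := pow_pos (hh.trans_le hhδ) 2
  have hpoint : ∀ x ∈ T, ‖wt x * symmDelta 2 (h * phiW x) f x‖ₑ ≤
      ‖S.indicator (fun x => wt x * symmDelta 2 (δ * phiW x) f x) x‖ₑ := by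
    intro x hxT
    have hxh : 8 * h ^ 2 ≤ 1 - |x| :=
      le_sub_comm.1 (abs_le.2 ⟨by linarith [hxT.1], by linarith [hxT.2]⟩)
    have hφ : 0 < phiW x := phiW_pos (by linarith)
    rcases le_or_gt (18 * δ ^ 2) (1 - |x|) with hinner | houter
    · have hxS : x ∈ S := ⟨by linarith [neg_abs_le x], by linarith [le_abs_self x]⟩
      have hroom : 3 * δ * phiW x ≤ 1 - |x| := mul_phiW_le_one_sub_abs (by linarith)
      rw [indicator_of_mem hxS, enorm_mul, enorm_mul]
      gcongr
      exact enorm_symmDelta_two_le hf (mul_pos hh hφ) (by gcongr)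
        (by linarith [mul_pos (hh.trans_le hhδ) hφ])
    · rw [symmDelta_two_eq_zero hends (by positivity) (mul_phiW_le_one_sub_abs (by linarith))
        (by linarith), mul_zero, enorm_zero]
      exact zero_le
  calc mainPartNorm f h wt p
      ≤ eLpNorm (S.indicator fun x => wt x * symmDelta 2 (δ * phiW x) f x) p
          (volume.restrict T) :=
        eLpNorm_mono_enorm_ae ((ae_restrict_iff' measurableSet_Icc).2 (.of_forall hpoint))
    _ ≤ eLpNorm (S.indicator fun x => wt x * symmDelta 2 (δ * phiW x) f x) p volume :=
        eLpNorm_mono_measure _ Measure.restrict_le_self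
    _ = mainPartNorm f δ wt p := eLpNorm_indicator_eq_eLpNorm_restrict measurableSet_Icc

lemma OmegaMain_two_eq_mainPartNorm (hf : ConvexOn ℝ (Ioo (-1) 1) f)
    (hends : AffineNearEndpoints (36 * δ ^ 2) f) (hδ : 0 < δ) (wt : ℝ → ℝ) (p : ℝ≥0∞) :
    OmegaMain 2 f δ wt p = mainPartNorm f δ wt p := by
  have hsup : OmegaMain 2 f δ wt p = ⨆ h ∈ Ioc 0 δ, mainPartNorm f h wt p := by
    norm_num [OmegaMain, mainPartNorm]
  rw [hsup]
  exact le_antisymm (iSup₂_le fun h hh => mainPartNorm_mono hf hends hh.1 hh.2 wt p)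
    (le_iSup₂ (f := fun h _ => mainPartNorm f h wt p) δ ⟨hδ, le_rfl⟩)

lemma enorm_phipow_add_one_mul_symmDelta_le_of_affineNearEndpoints
    (hf : ConvexOn ℝ (Ioo (-1) 1) f) (hends : AffineNearEndpoints (36 * δ ^ 2) f) (hδ : 0 < δ)
    (hx : 2 * δ ^ 2 ≤ 1 - |x|) :
    ‖phipow (γ + 1) x * symmDelta 2 (δ * phiW x) f x‖ₑ ≤
      ENNReal.ofReal (4 * 2 ^ |γ| / δ) * mainPartNorm f δ (phipow γ) 1 := by
  rcases le_or_gt (18 * δ ^ 2) (1 - |x|) with hinner | houter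
  · exact enorm_phipow_add_one_mul_symmDelta_le hf hδ hinner
  · have hφ : 0 < phiW x := phiW_pos (by linarith [pow_pos hδ 2])
    rw [symmDelta_two_eq_zero hends (by positivity) (mul_phiW_le_one_sub_abs hx)
      (by linarith), mul_zero, enorm_zero]
    exact zero_le

end SymmDelta

lemma eLpNorm_le_mul_eLpNorm_one_rpow {α E F : Type*} [MeasurableSpace α] {μ : Measure α}
    [NormedAddCommGroup E] [NormedAddCommGroup F] {g : α → E} {u : α → F} {q K : ℝ≥0∞}
    (hq : q ≠ 0) (hK : K ≠ ∞) (hgu : ∀ᵐ x ∂μ, ‖g x‖ₑ ≤ K * ‖u x‖ₑ ^ q⁻¹.toReal) :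
    eLpNorm g q μ ≤ K * eLpNorm u 1 μ ^ q⁻¹.toReal := by
  rcases eq_or_ne q ∞ with rfl | hq'
  · simpa using eLpNormEssSup_le_of_ae_enorm_bound (by simpa using hgu)
  have hp : 0 < q.toReal := ENNReal.toReal_pos hq hq'
  rw [eLpNorm_eq_lintegral_rpow_enorm_toReal hq hq', eLpNorm_one_eq_lintegral_enorm,
    ENNReal.toReal_inv, one_div, ENNReal.rpow_inv_le_iff hp, ENNReal.mul_rpow_of_nonneg _ _ hp.le,
    ENNReal.rpow_inv_rpow hp.ne',
    ← lintegral_const_mul' _ _ (ENNReal.rpow_ne_top_of_nonneg hp.le hK)]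
  refine lintegral_mono_ae (hgu.mono fun x hx => ?_)
  calc ‖g x‖ₑ ^ q.toReal ≤ (K * ‖u x‖ₑ ^ q⁻¹.toReal) ^ q.toReal := by gcongr
    _ = K ^ q.toReal * ‖u x‖ₑ := by
        rw [ENNReal.mul_rpow_of_nonneg _ _ hp.le, ENNReal.toReal_inv,
          ENNReal.rpow_inv_rpow hp.ne']

lemma mainPartNorm_phipow_le {f : ℝ → ℝ} {β δ : ℝ} {q : ℝ≥0∞} (hq : 1 ≤ q) (hδ : 0 < δ)
    (hf : ConvexOn ℝ (Ioo (-1) 1) f) (hends : AffineNearEndpoints (36 * δ ^ 2) f)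
    {γ : ℝ} (hγ : γ = 2 * β - 1 + q⁻¹.toReal) :
    mainPartNorm f δ (phipow (2 * β)) q ≤
      ENNReal.ofReal (4 * 2 ^ |γ| / δ) ^ (1 - q⁻¹.toReal) * mainPartNorm f δ (phipow γ) 1 := by
  set θ : ℝ := q⁻¹.toReal
  set C : ℝ≥0∞ := ENNReal.ofReal (4 * 2 ^ |γ| / δ)
  set A : ℝ≥0∞ := mainPartNorm f δ (phipow γ) 1
  have hθ₀ : 0 ≤ θ := ENNReal.toReal_nonneg
  have hθ₁ : 0 ≤ 1 - θ := sub_nonneg.2 (ENNReal.toReal_le_of_le_ofReal zero_le_one (by simpa))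
  have hC : C ≠ 0 := (ENNReal.ofReal_pos.2 (by positivity)).ne'
  rcases eq_or_ne A ∞ with hA | hA
  · rw [hA, ENNReal.mul_top (ENNReal.rpow_pos hC.bot_lt ENNReal.ofReal_ne_top).ne']
    exact le_top
  have hinterp : ∀ x ∈ Icc (-1 + 8 * δ ^ 2) (1 - 8 * δ ^ 2),
      ‖phipow (2 * β) x * symmDelta 2 (δ * phiW x) f x‖ₑ ≤
        (C * A) ^ (1 - θ) * ‖phipow γ x * symmDelta 2 (δ * phiW x) f x‖ₑ ^ θ := by
    intro x hx
    have hxδ : 8 * δ ^ 2 ≤ 1 - |x| :=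
      le_sub_comm.1 (abs_le.2 ⟨by linarith [hx.1], by linarith [hx.2]⟩)
    have hδ2 : 0 < δ ^ 2 := pow_pos hδ 2
    rw [show 2 * β = (γ + 1) * (1 - θ) + γ * θ by rw [hγ]; ring,
      enorm_phipow_convexComb_mul (by linarith) hθ₀ (by linarith)]
    gcongr
    exact enorm_phipow_add_one_mul_symmDelta_le_of_affineNearEndpoints hf hends hδ (by linarith)
  calc mainPartNorm f δ (phipow (2 * β)) q ≤ (C * A) ^ (1 - θ) * A ^ θ :=
        eLpNorm_le_mul_eLpNorm_one_rpow (zero_lt_one.trans_le hq).ne'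
          (ENNReal.rpow_ne_top_of_nonneg hθ₁ (ENNReal.mul_ne_top ENNReal.ofReal_ne_top hA))
          ((ae_restrict_iff' measurableSet_Icc).2 (.of_forall hinterp))
    _ = C ^ (1 - θ) * A := by
        rw [ENNReal.mul_rpow_of_nonneg _ _ hθ₁, mul_assoc,
          ← ENNReal.rpow_add_of_nonneg _ _ hθ₁ hθ₀, sub_add_cancel, ENNReal.rpow_one]

theorem statement16_general (β : ℝ) (q : ℝ≥0∞) (hq : 1 ≤ q) :
    ∃ c > (0 : ℝ), ∀ δ : ℝ, 0 < δ → ∀ f ∈ MSet 2, AffineNearEndpoints (36 * δ ^ 2) f →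
      OmegaMain 2 f δ (phipow (2 * β)) q ≤
        ENNReal.ofReal (c * δ ^ (q⁻¹.toReal - 1)) *
          OmegaMain 2 f δ (phipow (2 * β - 1 + q⁻¹.toReal)) 1 := by
  refine ⟨(4 * 2 ^ |2 * β - 1 + q⁻¹.toReal|) ^ (1 - q⁻¹.toReal), by positivity,
    fun δ hδ f hf hends => ?_⟩
  have hconv : ConvexOn ℝ (Ioo (-1) 1) f := convexOn_of_mem_MSet_two hf
  rw [OmegaMain_two_eq_mainPartNorm hconv hends hδ, OmegaMain_two_eq_mainPartNorm hconv hends hδ]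
  convert! mainPartNorm_phipow_le hq hδ hconv hends rfl using 2
  rw [ENNReal.ofReal_rpow_of_pos (by positivity), Real.div_rpow (by positivity) hδ.le,
    ← neg_sub 1 q⁻¹.toReal, Real.rpow_neg hδ.le, div_eq_mul_inv]

theorem statement16 (β : ℝ) (q : ℝ≥0∞) (hq1 : 1 < q) (hq2 : q ≠ ∞) :
    ∃ c > (0 : ℝ), ∀ δ : ℝ, 0 < δ → δ < 1 / 100 →
      ∀ f : ℝ → ℝ, f ∈ MSet 2 ∩ WSet q β β →
      (∃ a b : ℝ, ∀ x ∈ Icc (-1 : ℝ) (-1 + 100 * δ ^ 2), f x = a * x + b) →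
      (∃ a b : ℝ, ∀ x ∈ Icc (1 - 100 * δ ^ 2) (1 : ℝ), f x = a * x + b) →
      OmegaMain 2 f δ (phipow (2 * β)) q ≤
        ENNReal.ofReal (c * δ ^ (1 / q.toReal - 1)) *
          OmegaMain 2 f δ (phipow (2 * β - 1 + 1 / q.toReal)) 1 := by
  obtain ⟨c, hc, hbound⟩ := statement16_general β q hq1.le
  refine ⟨c, hc, fun δ hδ _ f hf hleft hright => ?_⟩
  have hends : AffineNearEndpoints (36 * δ ^ 2) f :=
    AffineNearEndpoints.mono (by nlinarith) ⟨hleft, hright⟩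
  simpa only [ENNReal.toReal_inv, one_div] using hbound δ hδ f hf.1 hends
end
end
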